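/- arXiv:1805.06854 — 3 statements merged into one kernel-verified Lean document; each statement's English description precedes it below -/
import Mathlib

section
/- Let p be a prime, k a field of characteristic p, G = (ℤ/p)^n, and C a chain complex of k[G]-modules. For each 1 ≤ s ≤ p−1 the homology of the p-complex ιC is given by {}_sH_{pi−1}(ιC) = H_{2i−1}(C) and {}_sH_{pi−1+s}(ιC) = H_{2i}(C) for all i ∈ ℤ, and {}_sH_l(ιC) = 0 in all remaining degrees l. Moreover the maps i_* give isomorphisms {}_1H_l(ιC) ≅ {}_2H_l(ιC) ≅ ⋯ ≅ {}_{p−1}H_l(ιC) whenever l ≡ p−1 (mod p), and the maps d_* give isomorphisms {}_{p−1}H_l(ιC) ≅ ⋯ ≅ {}_2H_{l−p+3}(ιC) ≅ {}_1H_{l−p+2}(ιC) whenever l ≡ p−2 (mod p). -/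
/-! Statement 13 (Lemma 5.2): for a chain complex `C` of `k[G]`-modules, the homology of the
`p`-complex `ιC` (obtained by inserting `p-2` identity maps at the even-degree modules, so
that `(ιC)_{pi-1} = C_{2i-1}` and `(ιC)_j = C_{2i}` for `pi ≤ j ≤ pi+p-2`) is
`ₛH_{pi-1}(ιC) = H_{2i-1}(C)`, `ₛH_{pi-1+s}(ιC) = H_{2i}(C)`, and `0` in all remaining
degrees; moreover the maps `i_*` are isomorphisms in degrees `≡ p-1 (mod p)` and the maps
`d_*` are isomorphisms in the chain starting in degrees `≡ p-2 (mod p)`.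

The `p`-complex `ιC` is encoded by a `p`-complex `W` together with maps
`ψ j : C → W` identifying `C_{r j}` with `W_j` (where `r = iotaDeg p`) and intertwining the
differentials; the asserted identifications of homology are expressed elementwise through
`ψ`. -/

/-- The group algebra `k[(ℤ/p)ⁿ]`. -/
abbrev GroupRing (p n : ℕ) (k : Type) [Field k] : Type := AddMonoidAlgebra k (Fin n → ZMod p)

/-- A `ℤ`-graded `N`-complex of modules over the group algebra `k[(ℤ/p)ⁿ]`:
a module with an internal grading and a degree `-1` differential `d` with `d ^ N = 0`. -/
structure KGCx (p n : ℕ) (k : Type) [Field k] (N : ℕ) : Type 1 where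
  X : Type
  [acg : AddCommGroup X]
  [modR : Module (GroupRing p n k) X]
  [modk : Module k X]
  [tower : IsScalarTower k (GroupRing p n k) X]
  d : X →ₗ[GroupRing p n k] X
  gr : ℤ → Submodule (GroupRing p n k) X
  internal : DirectSum.IsInternal gr
  d_deg : ∀ m : ℤ, ∀ x ∈ gr m, d x ∈ gr (m - 1)
  d_pow : d ^ N = 0

attribute [instance] KGCx.acg KGCx.modR KGCx.modk KGCx.tower

namespace KGCx

variable {p n N : ℕ} {k : Type} [Field k] (C : KGCx p n k N)

/-- Perfect: the underlying graded module has a finite homogeneous basis over the group ring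
(i.e. it is a bounded complex of finitely generated free modules). -/
def IsPerfect : Prop :=
  ∃ (ι : Type) (_ : Fintype ι) (deg : ι → ℤ) (b : Module.Basis ι (GroupRing p n k) C.X),
    ∀ a, b a ∈ C.gr (deg a)

/-- Non-acyclic: the (total) homology is nonzero. -/
def NonAcyclic : Prop := ∃ x : C.X, C.d x = 0 ∧ x ∉ LinearMap.range C.d

/-- The differential as a `k`-linear map. -/
noncomputable def dk : C.X →ₗ[k] C.X := C.d.restrictScalars k

/-- The total homology `ker d ⧸ im d` as a `k`-vector space; its dimension is
`Σ_i dim_k H_i(C)`. -/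
noncomputable abbrev TotalHomology : Type :=
  ↥(LinearMap.ker C.dk) ⧸ (LinearMap.range C.dk).comap (LinearMap.ker C.dk).subtype

end KGCx

/-- The degree function of `ι`: `(ιC)_j = C_{iotaDeg p j}`, i.e. `r(pi-1) = 2i-1` and
`r(j) = 2i` for `pi ≤ j ≤ pi+p-2`. -/
def iotaDeg (p : ℕ) (j : ℤ) : ℤ :=
  2 * (j / p) + if j % p = (p : ℤ) - 1 then 1 else 0

section
variable {p n N : ℕ} {k : Type} [Field k]

/-- `s`-cycles of a graded `N`-complex in degree `l`. -/
noncomputable def cycW (W : KGCx p n k N) (s : ℕ) (l : ℤ) : Submodule (GroupRing p n k) W.X :=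
  LinearMap.ker (W.d ^ s) ⊓ W.gr l

/-- `s`-boundaries of a graded `N`-complex in degree `l`: `d^{N-s}(W_{l+N-s})`. -/
noncomputable def bdW (W : KGCx p n k N) (s : ℕ) (l : ℤ) : Submodule (GroupRing p n k) W.X :=
  (W.gr (l + ((N - s : ℕ) : ℤ))).map (W.d ^ (N - s))

end

/-! The complex `ιC` falls into blocks of `N` consecutive degrees. Write `E t x` for the copy of
`x ∈ C_{2i}` in degree `Ni - 1 + t`, `0 < t < N`, and `O x` for the copy of `x ∈ C_{2i-1}` in
degree `Ni - 1`. Then `d (E (t + 1) x) = E t x`, while `d (E 1 x) = O (d x)` and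
`d (O x) = E (N - 1) (d x)` in the next lower block. Hence `d ^ s` applied to `E t x` is the
injection `x ↦ E (t - s) x` for `s < t` and is `O (d x)` for `s = t`, and `d ^ s (O x)` is
`E (N - s) (d x)` for `0 < s < N`. The cycles and boundaries of `C` are thereby transported onto
those of `ιC` in the degrees `Ni - 1` and `Ni - 1 + s`. In a degree `Ni - 1 + t` with `t ≠ s` either
there are no `s`-cycles (`s < t`) or everything is an `s`-boundary (`t < s`). -/

section ImageAndKernel

variable {R M M₁ M₂ M₃ : Type*} [Semiring R] [AddCommMonoid M] [AddCommMonoid M₁]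
  [AddCommMonoid M₂] [AddCommMonoid M₃] [Module R M] [Module R M₁] [Module R M₂] [Module R M₃]

lemma map_map_eq_of_forall_mem {f : M →ₗ[R] M₁} {g : M₁ →ₗ[R] M₃} {e : M →ₗ[R] M₂}
    {h : M₂ →ₗ[R] M₃} {V : Submodule R M} (H : ∀ x ∈ V, g (f x) = h (e x)) :
    (V.map f).map g = (V.map e).map h :=
  SetLike.coe_injective <| by
    simpa only [Submodule.map_coe, Set.image_image] using Set.image_congr H

lemma ker_inf_map_eq_map_ker_inf {f : M →ₗ[R] M₁} {g : M₁ →ₗ[R] M₂} {e : M →ₗ[R] M₃}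
    {V : Submodule R M} (H : ∀ x ∈ V, g (f x) = 0 ↔ e x = 0) :
    LinearMap.ker g ⊓ V.map f = (LinearMap.ker e ⊓ V).map f := by
  ext w
  constructor
  · rintro ⟨hw, x, hx, rfl⟩
    exact ⟨x, ⟨(H x hx).1 hw, hx⟩, rfl⟩
  · rintro ⟨x, ⟨hex, hx⟩, rfl⟩
    exact ⟨(H x hx).2 hex, x, hx, rfl⟩

end ImageAndKernel

section BijectiveModulo

variable {R M M₁ : Type*} [Ring R] [AddCommGroup M] [AddCommGroup M₁] [Module R M] [Module R M₁]

/-- For `f` carrying `Z` into `Z'` and `B` into `B'`, bijectivity of the induced map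
`Z / (Z ∩ B) → Z' / (Z' ∩ B')`, spelled out on representatives. It expresses that a map induces
an isomorphism in homology when `Z`, `Z'` are the cycles and `B`, `B'` the boundaries. -/
def BijectiveModulo (f : M →ₗ[R] M₁) (Z B : Submodule R M) (Z' B' : Submodule R M₁) : Prop :=
  (∀ x ∈ Z, f x ∈ B' → x ∈ B) ∧ ∀ w ∈ Z', ∃ x ∈ Z, w - f x ∈ B'

lemma bijectiveModulo_map {f : M →ₗ[R] M₁} {V Z B : Submodule R M}
    (hf : Disjoint V (LinearMap.ker f)) (hZ : Z ≤ V) (hB : B ≤ V) :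
    BijectiveModulo f Z B (Z.map f) (B.map f) := by
  refine ⟨fun x hx hfx ↦ ?_, ?_⟩
  · exact ((LinearMap.disjoint_ker_iff_injOn.1 hf).mem_image_iff hB (hZ hx)).1 hfx
  · rintro _ ⟨x, hx, rfl⟩
    exact ⟨x, hx, by simp⟩

lemma bijectiveModulo_id (Z B : Submodule R M) : BijectiveModulo LinearMap.id Z B Z B := by
  simpa only [Submodule.map_id] using
    bijectiveModulo_map (f := LinearMap.id) (Z := Z) (B := B) (V := ⊤) (by simp) le_top le_top

end BijectiveModulo

section Degrees

variable {N : ℕ} {i t : ℤ}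

lemma blockDegree_ediv_emod (ht : 1 ≤ t) (htN : t ≤ N) :
    (N * i - 1 + t) / N = i ∧ (N * i - 1 + t) % N = t - 1 :=
  (Int.ediv_emod_unique (by lia)).2 ⟨by ring, by lia, by lia⟩

lemma blockBottom_ediv_emod (hN : 1 ≤ N) (i : ℤ) :
    (N * i - 1) / N = i - 1 ∧ (N * i - 1) % N = (N : ℤ) - 1 :=
  (Int.ediv_emod_unique (by lia)).2 ⟨by ring, by lia, by lia⟩

lemma iotaDeg_blockDegree (ht : 1 ≤ t) (htN : t < N) : iotaDeg N (N * i - 1 + t) = 2 * i := by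
  obtain ⟨hdiv, hmod⟩ := blockDegree_ediv_emod (i := i) ht htN.le
  rw [iotaDeg, hdiv, hmod, if_neg (by lia), add_zero]

lemma iotaDeg_blockBottom (hN : 1 ≤ N) (i : ℤ) : iotaDeg N (N * i - 1) = 2 * i - 1 := by
  obtain ⟨hdiv, hmod⟩ := blockBottom_ediv_emod hN i
  rw [iotaDeg, hdiv, hmod, if_pos rfl]
  ring

lemma exists_eq_blockDegree (hN : 0 < N) (l : ℤ) :
    ∃ (i : ℤ) (t : ℕ), t < N ∧ l = N * i - 1 + t := by
  have hmod_nonneg := Int.emod_nonneg (l + 1) (by lia : (N : ℤ) ≠ 0)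
  have hmod_lt := Int.emod_lt_of_pos (l + 1) (by lia : (0 : ℤ) < N)
  have hdivmod := Int.mul_ediv_add_emod (l + 1) N
  exact ⟨(l + 1) / N, ((l + 1) % N).toNat, by lia, by lia⟩

end Degrees

section GradedHomology

variable {R M : Type*} [Semiring R] [AddCommMonoid M] [Module R M]

/-- The `s`-cycles in degree `l` of a module with grading `𝒱` and endomorphism `d`. -/
def gradedCycles (d : Module.End R M) (𝒱 : ℤ → Submodule R M) (s : ℕ) (l : ℤ) : Submodule R M :=
  LinearMap.ker (d ^ s) ⊓ 𝒱 l

/-- The `s`-boundaries `d ^ (N - s) (𝒱 (l + N - s))` in degree `l` of a module with grading `𝒱`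
and endomorphism `d` of degree `-1`, regarded as an `N`-complex; meant for `s ≤ N`, as the natural
subtraction truncates. -/
def gradedBoundaries (N : ℕ) (d : Module.End R M) (𝒱 : ℤ → Submodule R M) (s : ℕ) (l : ℤ) :
    Submodule R M :=
  (𝒱 (l + ((N - s : ℕ) : ℤ))).map (d ^ (N - s))

end GradedHomology

/-- The maps `ψ j` exhibit the graded module `(M', d', 𝒲)` as `ι` of the graded module
`(M, d, 𝒞)` with `N - 2` identities inserted: `ψ j` identifies `𝒞 (iotaDeg N j)` with `𝒲 j`, and
`d'` is `d` out of the degrees `≡ 0, -1 (mod N)` and the identity out of the others. -/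
structure IsIota {R M M' : Type*} [Ring R] [AddCommGroup M] [AddCommGroup M'] [Module R M]
    [Module R M'] (N : ℕ) (d : Module.End R M) (𝒞 : ℤ → Submodule R M) (d' : Module.End R M')
    (𝒲 : ℤ → Submodule R M') (ψ : ℤ → M →ₗ[R] M') : Prop where
  d_mem : ∀ m, ∀ x ∈ 𝒞 m, d x ∈ 𝒞 (m - 1)
  map_eq : ∀ j, (𝒞 (iotaDeg N j)).map (ψ j) = 𝒲 j
  eq_zero : ∀ j, ∀ x ∈ 𝒞 (iotaDeg N j), ψ j x = 0 → x = 0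
  d_apply : ∀ j, ∀ x ∈ 𝒞 (iotaDeg N j),
    d' (ψ j x) = if j % N = 0 ∨ j % N = (N : ℤ) - 1 then ψ (j - 1) (d x) else ψ (j - 1) x

namespace IsIota

variable {R M M' : Type*} [Ring R] [AddCommGroup M] [AddCommGroup M'] [Module R M] [Module R M']
  {N : ℕ} {d : Module.End R M} {𝒞 : ℤ → Submodule R M} {d' : Module.End R M'}
  {𝒲 : ℤ → Submodule R M'} {ψ : ℤ → M →ₗ[R] M'} {i : ℤ} {s t : ℕ}

lemma map_d_le (h : IsIota N d 𝒞 d' 𝒲 ψ) {m m' : ℤ} (hm : m - 1 = m') : (𝒞 m).map d ≤ 𝒞 m' :=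
  hm ▸ Submodule.map_le_iff_le_comap.2 (h.d_mem m)

lemma map_even (h : IsIota N d 𝒞 d' 𝒲 ψ) (ht : 1 ≤ t) (htN : t < N) :
    (𝒞 (2 * i)).map (ψ (N * i - 1 + t)) = 𝒲 (N * i - 1 + t) := by
  rw [← h.map_eq, iotaDeg_blockDegree (by lia) (by lia)]

lemma map_odd (h : IsIota N d 𝒞 d' 𝒲 ψ) (hN : 1 ≤ N) :
    (𝒞 (2 * i - 1)).map (ψ (N * i - 1)) = 𝒲 (N * i - 1) := by
  rw [← h.map_eq, iotaDeg_blockBottom hN]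

lemma disjoint_ker_even (h : IsIota N d 𝒞 d' 𝒲 ψ) (ht : 1 ≤ t) (htN : t < N) :
    Disjoint (𝒞 (2 * i)) (LinearMap.ker (ψ (N * i - 1 + t))) :=
  LinearMap.disjoint_ker.2 <| iotaDeg_blockDegree (N := N) (i := i) (t := t) (by lia) (by lia) ▸
    h.eq_zero _

lemma disjoint_ker_odd (h : IsIota N d 𝒞 d' 𝒲 ψ) (hN : 1 ≤ N) :
    Disjoint (𝒞 (2 * i - 1)) (LinearMap.ker (ψ (N * i - 1))) :=
  LinearMap.disjoint_ker.2 <| iotaDeg_blockBottom hN i ▸ h.eq_zero _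

lemma apply_even_eq_zero_iff (h : IsIota N d 𝒞 d' 𝒲 ψ) (ht : 1 ≤ t) (htN : t < N) {x : M}
    (hx : x ∈ 𝒞 (2 * i)) : ψ (N * i - 1 + t) x = 0 ↔ x = 0 :=
  ⟨LinearMap.disjoint_ker.1 (h.disjoint_ker_even ht htN) x hx, fun hx₀ ↦ by rw [hx₀, map_zero]⟩

lemma apply_odd_eq_zero_iff (h : IsIota N d 𝒞 d' 𝒲 ψ) (hN : 1 ≤ N) {x : M}
    (hx : x ∈ 𝒞 (2 * i - 1)) : ψ (N * i - 1) x = 0 ↔ x = 0 :=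
  ⟨LinearMap.disjoint_ker.1 (h.disjoint_ker_odd hN) x hx, fun hx₀ ↦ by rw [hx₀, map_zero]⟩

lemma d_even_succ (h : IsIota N d 𝒞 d' 𝒲 ψ) (ht : 1 ≤ t) (htN : t + 1 < N) {x : M}
    (hx : x ∈ 𝒞 (2 * i)) :
    d' (ψ (N * i - 1 + (t + 1 : ℕ)) x) = ψ (N * i - 1 + t) x := by
  have hdeg : (N * i - 1 + (t + 1 : ℕ) - 1 : ℤ) = N * i - 1 + t := by lia
  rw [h.d_apply _ x (by rwa [iotaDeg_blockDegree (by lia) (by lia)]),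
    (blockDegree_ediv_emod (by lia) (by lia)).2, if_neg (by lia), hdeg]

lemma d_even_one (h : IsIota N d 𝒞 d' 𝒲 ψ) (hN : 1 < N) {x : M} (hx : x ∈ 𝒞 (2 * i)) :
    d' (ψ (N * i - 1 + (1 : ℕ)) x) = ψ (N * i - 1) (d x) := by
  have hdeg : (N * i - 1 + (1 : ℕ) - 1 : ℤ) = N * i - 1 := by lia
  rw [h.d_apply _ x (by rwa [iotaDeg_blockDegree (by lia) (by lia)]),
    (blockDegree_ediv_emod (by lia) (by lia)).2, if_pos (by simp), hdeg]

lemma d_odd (h : IsIota N d 𝒞 d' 𝒲 ψ) (hN : 1 ≤ N) {x : M} (hx : x ∈ 𝒞 (2 * i - 1)) :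
    d' (ψ (N * i - 1) x) = ψ (N * (i - 1) - 1 + (N - 1 : ℕ)) (d x) := by
  have hdeg : (N * i - 1 - 1 : ℤ) = N * (i - 1) - 1 + (N - 1 : ℕ) := by
    push_cast [hN]
    ring
  rw [h.d_apply _ x (by rwa [iotaDeg_blockBottom hN]), (blockBottom_ediv_emod hN i).2,
    if_pos (Or.inr rfl), hdeg]

lemma d_pow_even_add (h : IsIota N d 𝒞 d' 𝒲 ψ) (ht : 1 ≤ t) (hts : t + s < N) {x : M}
    (hx : x ∈ 𝒞 (2 * i)) :
    (d' ^ s) (ψ (N * i - 1 + (t + s : ℕ)) x) = ψ (N * i - 1 + t) x := by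
  induction s with
  | zero => simp
  | succ s ih =>
    rw [pow_succ, Module.End.mul_apply, ← add_assoc, h.d_even_succ (by lia) (by lia) hx,
      ih (by lia)]

lemma d_pow_even_self (h : IsIota N d 𝒞 d' 𝒲 ψ) (ht : 1 ≤ t) (htN : t < N) {x : M}
    (hx : x ∈ 𝒞 (2 * i)) : (d' ^ t) (ψ (N * i - 1 + t) x) = ψ (N * i - 1) (d x) := by
  obtain ⟨t, rfl⟩ := Nat.exists_eq_add_of_le ht
  rw [pow_add, pow_one, Module.End.mul_apply, h.d_pow_even_add le_rfl htN hx,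
    h.d_even_one (by lia) hx]

lemma d_pow_odd (h : IsIota N d 𝒞 d' 𝒲 ψ) (hs : 1 ≤ s) (ht : 1 ≤ t) (hts : t + s = N) {x : M}
    (hx : x ∈ 𝒞 (2 * i - 1)) :
    (d' ^ s) (ψ (N * i - 1) x) = ψ (N * (i - 1) - 1 + t) (d x) := by
  obtain ⟨s, rfl⟩ := Nat.exists_eq_add_of_le' hs
  have hdx : d x ∈ 𝒞 (2 * (i - 1)) := h.map_d_le (by ring) (Submodule.mem_map_of_mem hx)
  rw [pow_succ, Module.End.mul_apply, h.d_odd (by lia) hx, show N - 1 = t + s by lia,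
    h.d_pow_even_add ht (by lia) hdx]

lemma gradedCycles_odd (h : IsIota N d 𝒞 d' 𝒲 ψ) (hs : 1 ≤ s) (hsN : s < N) :
    gradedCycles d' 𝒲 s (N * i - 1) =
      (LinearMap.ker d ⊓ 𝒞 (2 * i - 1)).map (ψ (N * i - 1)) := by
  rw [gradedCycles, ← h.map_odd (by lia)]
  refine ker_inf_map_eq_map_ker_inf fun x hx ↦ ?_
  rw [h.d_pow_odd (t := N - s) hs (by lia) (by lia) hx]
  exact h.apply_even_eq_zero_iff (by lia) (by lia)
    (h.map_d_le (by ring) (Submodule.mem_map_of_mem hx))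

lemma gradedBoundaries_odd (h : IsIota N d 𝒞 d' 𝒲 ψ) (hs : 1 ≤ s) (hsN : s < N) :
    gradedBoundaries N d' 𝒲 s (N * i - 1) = ((𝒞 (2 * i)).map d).map (ψ (N * i - 1)) := by
  rw [gradedBoundaries, ← h.map_even (by lia) (by lia)]
  exact map_map_eq_of_forall_mem fun x hx ↦ h.d_pow_even_self (by lia) (by lia) hx

lemma gradedCycles_even (h : IsIota N d 𝒞 d' 𝒲 ψ) (hs : 1 ≤ s) (hsN : s < N) :
    gradedCycles d' 𝒲 s (N * i - 1 + s) =
      (LinearMap.ker d ⊓ 𝒞 (2 * i)).map (ψ (N * i - 1 + s)) := by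
  rw [gradedCycles, ← h.map_even hs hsN]
  refine ker_inf_map_eq_map_ker_inf fun x hx ↦ ?_
  rw [h.d_pow_even_self hs hsN hx]
  exact h.apply_odd_eq_zero_iff (by lia) (h.map_d_le rfl (Submodule.mem_map_of_mem hx))

lemma gradedBoundaries_even (h : IsIota N d 𝒞 d' 𝒲 ψ) (hs : 1 ≤ s) (hsN : s < N) :
    gradedBoundaries N d' 𝒲 s (N * i - 1 + s) =
      ((𝒞 (2 * i + 1)).map d).map (ψ (N * i - 1 + s)) := by
  have hdeg : (N * i - 1 + s + (N - s : ℕ) : ℤ) = N * (i + 1) - 1 := by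
    push_cast [hsN.le]
    ring
  rw [gradedBoundaries, hdeg, ← h.map_odd (by lia), show 2 * (i + 1) - 1 = 2 * i + 1 by ring]
  refine map_map_eq_of_forall_mem fun x hx ↦ ?_
  rw [h.d_pow_odd (t := s) (by lia) hs (by lia) (by convert hx using 2; ring),
    add_sub_cancel_right]

lemma gradedCycles_eq_bot (h : IsIota N d 𝒞 d' 𝒲 ψ) (hst : s < t) (htN : t < N) :
    gradedCycles d' 𝒲 s (N * i - 1 + t) = ⊥ := by
  obtain ⟨u, rfl⟩ := Nat.exists_eq_add_of_le' hst.le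
  have hker : ∀ x ∈ 𝒞 (2 * i), (d' ^ s) (ψ (N * i - 1 + (u + s : ℕ)) x) = 0 ↔
      LinearMap.id (R := R) x = 0 := fun x hx ↦ by
    rw [h.d_pow_even_add (by lia) htN hx]
    exact h.apply_even_eq_zero_iff (by lia) (by lia) hx
  rw [gradedCycles, ← h.map_even (by lia) htN, ker_inf_map_eq_map_ker_inf hker,
    LinearMap.ker_id, bot_inf_eq, Submodule.map_bot]

lemma gradedBoundaries_eq (h : IsIota N d 𝒞 d' 𝒲 ψ) (ht : 1 ≤ t) (hts : t < s) (hsN : s < N) :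
    gradedBoundaries N d' 𝒲 s (N * i - 1 + t) = 𝒲 (N * i - 1 + t) := by
  have hdeg : (N * i - 1 + t + (N - s : ℕ) : ℤ) = N * i - 1 + (t + (N - s) : ℕ) := by lia
  rw [gradedBoundaries, hdeg, ← h.map_even (by lia) (by lia), ← h.map_even ht (by lia),
    map_map_eq_of_forall_mem (e := LinearMap.id) (h := ψ (N * i - 1 + t))
      fun x hx ↦ h.d_pow_even_add ht (by lia) hx, Submodule.map_id]

lemma gradedCycles_le_gradedBoundaries (h : IsIota N d 𝒞 d' 𝒲 ψ) (hsN : s < N) {l : ℤ}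
    (hl : ∀ i : ℤ, l ≠ N * i - 1 ∧ l ≠ N * i - 1 + s) :
    gradedCycles d' 𝒲 s l ≤ gradedBoundaries N d' 𝒲 s l := by
  obtain ⟨i, t, htN, rfl⟩ := exists_eq_blockDegree (Nat.zero_lt_of_lt hsN) l
  obtain ⟨ht₀, hts⟩ := hl i
  rcases lt_or_gt_of_ne (show t ≠ s by lia) with hlt | hgt
  · exact (h.gradedBoundaries_eq (by lia) hlt hsN).symm ▸ inf_le_right
  · exact (h.gradedCycles_eq_bot hgt htN).symm ▸ bot_le

lemma bijectiveModulo_odd (h : IsIota N d 𝒞 d' 𝒲 ψ) (hs : 1 ≤ s) (hsN : s < N) :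
    BijectiveModulo (ψ (N * i - 1)) (LinearMap.ker d ⊓ 𝒞 (2 * i - 1)) ((𝒞 (2 * i)).map d)
      (gradedCycles d' 𝒲 s (N * i - 1)) (gradedBoundaries N d' 𝒲 s (N * i - 1)) := by
  rw [h.gradedCycles_odd hs hsN, h.gradedBoundaries_odd hs hsN]
  exact bijectiveModulo_map (h.disjoint_ker_odd (by lia)) inf_le_right (h.map_d_le rfl)

lemma bijectiveModulo_even (h : IsIota N d 𝒞 d' 𝒲 ψ) (hs : 1 ≤ s) (hsN : s < N) :
    BijectiveModulo (ψ (N * i - 1 + s)) (LinearMap.ker d ⊓ 𝒞 (2 * i)) ((𝒞 (2 * i + 1)).map d)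
      (gradedCycles d' 𝒲 s (N * i - 1 + s)) (gradedBoundaries N d' 𝒲 s (N * i - 1 + s)) := by
  rw [h.gradedCycles_even hs hsN, h.gradedBoundaries_even hs hsN]
  exact bijectiveModulo_map (h.disjoint_ker_even hs hsN) inf_le_right
    (h.map_d_le (add_sub_cancel_right _ _))

lemma bijectiveModulo_inclusion (h : IsIota N d 𝒞 d' 𝒲 ψ) (hs : 1 ≤ s) (hsN : s + 1 < N) :
    BijectiveModulo LinearMap.id
      (gradedCycles d' 𝒲 s (N * i - 1)) (gradedBoundaries N d' 𝒲 s (N * i - 1))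
      (gradedCycles d' 𝒲 (s + 1) (N * i - 1)) (gradedBoundaries N d' 𝒲 (s + 1) (N * i - 1)) := by
  rw [h.gradedCycles_odd hs (by lia), h.gradedBoundaries_odd hs (by lia),
    h.gradedCycles_odd (by lia) hsN, h.gradedBoundaries_odd (by lia) hsN]
  exact bijectiveModulo_id _ _

lemma disjoint_ker_d (h : IsIota N d 𝒞 d' 𝒲 ψ) (hs : 1 ≤ s) (hsN : s + 1 < N) :
    Disjoint (𝒲 (N * i - 1 + (s + 1 : ℕ))) (LinearMap.ker d') := by
  rw [disjoint_comm, disjoint_iff]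
  simpa only [gradedCycles, pow_one] using
    h.gradedCycles_eq_bot (s := 1) (t := s + 1) (by lia) hsN

lemma bijectiveModulo_d (h : IsIota N d 𝒞 d' 𝒲 ψ) (hs : 1 ≤ s) (hsN : s + 1 < N) :
    BijectiveModulo d'
      (gradedCycles d' 𝒲 (s + 1) (N * i - 1 + (s + 1 : ℕ)))
      (gradedBoundaries N d' 𝒲 (s + 1) (N * i - 1 + (s + 1 : ℕ)))
      (gradedCycles d' 𝒲 s (N * i - 1 + s)) (gradedBoundaries N d' 𝒲 s (N * i - 1 + s)) := by
  have map_d_map : ∀ V ≤ 𝒞 (2 * i),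
      (V.map (ψ (N * i - 1 + (s + 1 : ℕ)))).map d' = V.map (ψ (N * i - 1 + s)) := fun V hV ↦ by
    rw [map_map_eq_of_forall_mem (e := LinearMap.id) fun x hx ↦ h.d_even_succ hs hsN (hV hx),
      Submodule.map_id]
  have hB : (𝒞 (2 * i + 1)).map d ≤ 𝒞 (2 * i) := h.map_d_le (add_sub_cancel_right _ _)
  rw [h.gradedCycles_even (by lia) hsN, h.gradedBoundaries_even (by lia) hsN,
    h.gradedCycles_even hs (by lia), h.gradedBoundaries_even hs (by lia),
    ← map_d_map _ inf_le_right, ← map_d_map _ hB]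
  have hW := h.map_even (i := i) (t := s + 1) (by lia) hsN
  exact bijectiveModulo_map (h.disjoint_ker_d hs hsN)
    (hW ▸ Submodule.map_mono inf_le_right) (hW ▸ Submodule.map_mono hB)

end IsIota

theorem stmt_13_general {R M M' : Type*} [Ring R] [AddCommGroup M] [AddCommGroup M'] [Module R M]
    [Module R M'] {N : ℕ} {d : Module.End R M} {𝒞 : ℤ → Submodule R M} {d' : Module.End R M'}
    {𝒲 : ℤ → Submodule R M'} {ψ : ℤ → M →ₗ[R] M'} (h : IsIota N d 𝒞 d' 𝒲 ψ) :
    (∀ s : ℕ, 1 ≤ s → s ≤ N - 1 →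
      (∀ i : ℤ,
        BijectiveModulo (ψ (N * i - 1)) (LinearMap.ker d ⊓ 𝒞 (2 * i - 1)) ((𝒞 (2 * i)).map d)
          (gradedCycles d' 𝒲 s (N * i - 1)) (gradedBoundaries N d' 𝒲 s (N * i - 1)) ∧
        BijectiveModulo (ψ (N * i - 1 + s)) (LinearMap.ker d ⊓ 𝒞 (2 * i)) ((𝒞 (2 * i + 1)).map d)
          (gradedCycles d' 𝒲 s (N * i - 1 + s)) (gradedBoundaries N d' 𝒲 s (N * i - 1 + s))) ∧
      ∀ l : ℤ, (∀ i : ℤ, l ≠ N * i - 1 ∧ l ≠ N * i - 1 + s) →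
        gradedCycles d' 𝒲 s l ≤ gradedBoundaries N d' 𝒲 s l) ∧
    (∀ s : ℕ, 1 ≤ s → s ≤ N - 2 → ∀ l : ℤ, (∃ i : ℤ, l = N * i - 1) →
      BijectiveModulo LinearMap.id (gradedCycles d' 𝒲 s l) (gradedBoundaries N d' 𝒲 s l)
        (gradedCycles d' 𝒲 (s + 1) l) (gradedBoundaries N d' 𝒲 (s + 1) l)) ∧
    (∀ s : ℕ, 2 ≤ s → s ≤ N - 1 → ∀ l : ℤ, (∃ i : ℤ, l = N * i - 2) →
      BijectiveModulo d' (gradedCycles d' 𝒲 s (l - ((N - 1 - s : ℕ) : ℤ)))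
        (gradedBoundaries N d' 𝒲 s (l - ((N - 1 - s : ℕ) : ℤ)))
        (gradedCycles d' 𝒲 (s - 1) (l - ((N - 1 - s : ℕ) : ℤ) - 1))
        (gradedBoundaries N d' 𝒲 (s - 1) (l - ((N - 1 - s : ℕ) : ℤ) - 1))) := by
  refine ⟨fun s hs hsN ↦ ⟨fun i ↦ ⟨?_, ?_⟩, fun l hl ↦ ?_⟩, ?_, ?_⟩
  · exact h.bijectiveModulo_odd hs (by lia)
  · exact h.bijectiveModulo_even hs (by lia)
  · exact h.gradedCycles_le_gradedBoundaries (by lia) hl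
  · rintro s hs hsN _ ⟨i, rfl⟩
    exact h.bijectiveModulo_inclusion hs (by lia)
  · rintro s hs hsN _ ⟨i, rfl⟩
    obtain ⟨t, rfl⟩ := Nat.exists_eq_add_of_le' (show 1 ≤ s by lia)
    have hsource : (N * i - 2 - (N - 1 - (t + 1) : ℕ) : ℤ) = N * (i - 1) - 1 + (t + 1 : ℕ) := by
      rw [mul_sub]
      lia
    have htarget : (N * (i - 1) - 1 + (t + 1 : ℕ) - 1 : ℤ) = N * (i - 1) - 1 + t := by lia
    rw [hsource, htarget]
    exact h.bijectiveModulo_d (by lia) (by lia)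

theorem stmt_13 (p n : ℕ) (hp : p.Prime) (k : Type) [Field k] [CharP k p]
    -- a chain complex `C` of `k[G]`-modules:
    (C : KGCx p n k 2)
    -- the `p`-complex `W = ιC`:
    (W : KGCx p n k p)
    -- the structure maps `ψ j` identifying `C_{r j}` with `W_j`:
    (ψ : ℤ → (C.X →ₗ[GroupRing p n k] W.X))
    (hψsurj : ∀ j : ℤ, (C.gr (iotaDeg p j)).map (ψ j) = W.gr j)
    (hψinj : ∀ j : ℤ, ∀ x ∈ C.gr (iotaDeg p j), ψ j x = 0 → x = 0)
    (hψd : ∀ j : ℤ, ∀ x ∈ C.gr (iotaDeg p j),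
      W.d (ψ j x) =
        if j % p = 0 ∨ j % p = (p : ℤ) - 1 then ψ (j - 1) (C.d x) else ψ (j - 1) x) :
    -- the homology identifications, for each `1 ≤ s ≤ p-1`:
    (∀ s : ℕ, 1 ≤ s → s ≤ p - 1 →
      -- `ₛH_{pi-1}(ιC) = H_{2i-1}(C)` and `ₛH_{pi-1+s}(ιC) = H_{2i}(C)`, via `ψ`:
      (∀ i : ℤ,
        (∀ x ∈ LinearMap.ker C.d ⊓ C.gr (2 * i - 1),
          ψ (p * i - 1) x ∈ bdW W s (p * i - 1) → x ∈ (C.gr (2 * i)).map C.d) ∧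
        (∀ w ∈ cycW W s (p * i - 1),
          ∃ x ∈ LinearMap.ker C.d ⊓ C.gr (2 * i - 1),
            w - ψ (p * i - 1) x ∈ bdW W s (p * i - 1)) ∧
        (∀ x ∈ LinearMap.ker C.d ⊓ C.gr (2 * i),
          ψ (p * i - 1 + s) x ∈ bdW W s (p * i - 1 + s) →
            x ∈ (C.gr (2 * i + 1)).map C.d) ∧
        (∀ w ∈ cycW W s (p * i - 1 + s),
          ∃ x ∈ LinearMap.ker C.d ⊓ C.gr (2 * i),
            w - ψ (p * i - 1 + s) x ∈ bdW W s (p * i - 1 + s))) ∧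
      -- `ₛH_l(ιC) = 0` in all remaining degrees:
      (∀ l : ℤ, (∀ i : ℤ, l ≠ p * i - 1 ∧ l ≠ p * i - 1 + s) →
        cycW W s l ≤ bdW W s l)) ∧
    -- `i_* : ₛH_l ≅ ₛ₊₁H_l` for `l ≡ p-1 (mod p)` and `1 ≤ s ≤ p-2`:
    (∀ s : ℕ, 1 ≤ s → s ≤ p - 2 → ∀ l : ℤ, (∃ i : ℤ, l = p * i - 1) →
      (∀ x ∈ cycW W s l, x ∈ bdW W (s + 1) l → x ∈ bdW W s l) ∧
      (∀ x ∈ cycW W (s + 1) l, ∃ y ∈ cycW W s l, x - y ∈ bdW W (s + 1) l)) ∧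
    -- `d_* : ₛH_m ≅ ₛ₋₁H_{m-1}` (with `m = l - (p-1-s)`) for `l ≡ p-2 (mod p)` and
    -- `2 ≤ s ≤ p-1`:
    (∀ s : ℕ, 2 ≤ s → s ≤ p - 1 → ∀ l : ℤ, (∃ i : ℤ, l = p * i - 2) →
      (∀ x ∈ cycW W s (l - ((p - 1 - s : ℕ) : ℤ)),
        W.d x ∈ bdW W (s - 1) (l - ((p - 1 - s : ℕ) : ℤ) - 1) →
          x ∈ bdW W s (l - ((p - 1 - s : ℕ) : ℤ))) ∧
      (∀ w ∈ cycW W (s - 1) (l - ((p - 1 - s : ℕ) : ℤ) - 1),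
        ∃ x ∈ cycW W s (l - ((p - 1 - s : ℕ) : ℤ)),
          w - W.d x ∈ bdW W (s - 1) (l - ((p - 1 - s : ℕ) : ℤ) - 1))) := by
  simpa only [BijectiveModulo, gradedCycles, gradedBoundaries, cycW, bdW, LinearMap.id_apply,
    and_assoc] using stmt_13_general ⟨C.d_deg, hψsurj, hψinj, hψd⟩
end

section
/- Let p be a prime, k a field of characteristic p, G = (ℤ/p)^n, and A = k[x_1,…,x_n] graded by deg(x_i) = −1. If C is a free and finitely generated p-complex of k[G]-modules, then dim_k {}_sH_•(β(C)) < ∞ for all 1 ≤ s ≤ p−1. -/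
/-! Statement 14 (Lemma 5.9): if `C` is a free, finitely generated `p`-complex of
`k[G]`-modules (`G = (ℤ/p)ⁿ`, `char k = p`), then `dim_k ₛH(β(C)) < ∞` for all
`1 ≤ s ≤ p-1`, where `β(C) = C ⊗_k A` (`A = k[x_1,…,x_n]`) with differential
`d(c ⊗ f) = d(c) ⊗ f + Σ_i y_i c ⊗ x_i f` and `y_i = e_i - 1 ∈ k[G]`. -/

open scoped TensorProduct

/-- The polynomial ring `A = k[x_1,…,x_n]`. -/
abbrev PolyA (n : ℕ) (k : Type) [Field k] : Type := MvPolynomial (Fin n) k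

/-- The differential of `β(C) = C ⊗_k A`:
`d(c ⊗ f) = d(c) ⊗ f + Σ_i y_i c ⊗ x_i f`, where `y_i = e_i - 1` in the group ring. -/
noncomputable def betaD {p n N : ℕ} {k : Type} [Field k] (C : KGCx p n k N) :
    (C.X ⊗[k] PolyA n k) →ₗ[k] (C.X ⊗[k] PolyA n k) :=
  TensorProduct.map (C.d.restrictScalars k) LinearMap.id +
    ∑ i : Fin n,
      TensorProduct.map
        ((((AddMonoidAlgebra.single (Pi.single i (1 : ZMod p)) (1 : k) : GroupRing p n k) - 1) •
            (LinearMap.id : C.X →ₗ[GroupRing p n k] C.X)).restrictScalars k)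
        (LinearMap.mulLeft k (MvPolynomial.X i))

/-! The differential of `β(C)` is `D = ∑ᵢ xᵢ yᵢ + d`. On a free module, let `δᵢ` be the derivation
`∂/∂yᵢ` of `k[G]` applied to the coordinates. Then `[δᵢ, D] = xᵢ + [δᵢ, d]`, where the error term
`[δᵢ, d]` belongs to the nil ideal of operators which strictly lower the degree in `C`.

In characteristic `p` we have `(ad D) ^ p = ad (D ^ p) = 0`, so
`K = (ad D) ^ (p - 1) ((-δᵢ) ^ (p - 1))` commutes with `D`. Expanding `K` into terms
`D ^ a δᵢ ^ (p - 1) D ^ b` with `a + b = p - 1` shows that it is zero on homology. On the other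
hand, modulo the nil ideal, `K` is `(p - 1)! xᵢ ^ (p - 1) = -xᵢ ^ (p - 1)`. Hence every `xᵢ` acts
nilpotently on the homology, which is a finitely generated module over `k[x₁, …, xₙ]` and is
therefore finite-dimensional. -/

section Commutator

variable {E : Type*} [Ring E]

attribute [local instance] LieRing.ofAssociativeRing

theorem lie_pow_succ {D y : E} (hy : Commute y ⁅D, y⁆) (m : ℕ) :
    ⁅D, y ^ (m + 1)⁆ = (m + 1) • (y ^ m * ⁅D, y⁆) := by
  induction m with
  | zero => simp
  | succ m ih =>
    have leibniz : ⁅D, y ^ (m + 1) * y⁆ = ⁅D, y ^ (m + 1)⁆ * y + y ^ (m + 1) * ⁅D, y⁆ := by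
      simp only [Ring.lie_def]
      noncomm_ring
    rw [pow_succ y (m + 1), leibniz, ih, smul_mul_assoc, mul_assoc, ← hy.eq, ← mul_assoc,
      ← pow_succ, succ_nsmul _ (m + 1)]

theorem ad_pow_apply_mul_right {D z : E} (hz : Commute D z) (u : E) (m : ℕ) :
    (LieAlgebra.ad ℤ E D ^ m) (u * z) = (LieAlgebra.ad ℤ E D ^ m) u * z := by
  induction m generalizing u with
  | zero => rfl
  | succ m ih =>
    have hD : ⁅D, u * z⁆ = ⁅D, u⁆ * z := by
      rw [Ring.lie_def, Ring.lie_def, sub_mul, mul_assoc u z D, ← hz.eq, mul_assoc, mul_assoc]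
    rw [pow_succ, Module.End.mul_apply, Module.End.mul_apply, LieAlgebra.ad_apply,
      LieAlgebra.ad_apply, hD, ih]

theorem ad_pow_apply_pow {D y : E} (hD : Commute D ⁅D, y⁆) (hy : Commute y ⁅D, y⁆) (m : ℕ) :
    (LieAlgebra.ad ℤ E D ^ m) (y ^ m) = m.factorial • ⁅D, y⁆ ^ m := by
  induction m with
  | zero => simp
  | succ m ih =>
    rw [pow_succ (LieAlgebra.ad ℤ E D), Module.End.mul_apply, LieAlgebra.ad_apply,
      lie_pow_succ hy, map_nsmul, ad_pow_apply_mul_right hD, ih, smul_mul_assoc, ← pow_succ,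
      smul_smul, Nat.factorial_succ]

theorem map_ad_pow_apply {E' : Type*} [Ring E'] (φ : E →+* E') (D h : E) (m : ℕ) :
    φ ((LieAlgebra.ad ℤ E D ^ m) h) = (LieAlgebra.ad ℤ E' (φ D) ^ m) (φ h) := by
  induction m generalizing h with
  | zero => rfl
  | succ m ih =>
    simp only [pow_succ, Module.End.mul_apply, ih, LieAlgebra.ad_apply, Ring.lie_def, map_sub,
      map_mul]

theorem ad_pow_apply_eq_sum (D h : E) (m : ℕ) :
    (LieAlgebra.ad ℤ E D ^ m) h =
      ∑ i ∈ Finset.range (m + 1), m.choose i • (D ^ i * h * (-D) ^ (m - i)) := by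
  have had : LieAlgebra.ad ℤ E D = LinearMap.mulLeft ℤ D + LinearMap.mulRight ℤ (-D) := by
    ext u
    simp [Ring.lie_def, sub_eq_add_neg]
  rw [had, (LinearMap.commute_mulLeft_right D (-D)).add_pow, LinearMap.sum_apply]
  exact Finset.sum_congr rfl fun i _ => by
    rw [LinearMap.pow_mulLeft, LinearMap.pow_mulRight, ← nsmul_eq_mul', LinearMap.smul_apply,
      Module.End.mul_apply, LinearMap.mulRight_apply, LinearMap.mulLeft_apply, mul_assoc]

variable {p : ℕ}

theorem add_pow_prime_of_natCast_eq_zero (hp : p.Prime) (hE : (p : E) = 0) {a b : E}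
    (h : Commute a b) : (a + b) ^ p = a ^ p + b ^ p := by
  obtain ⟨r, hr⟩ := h.exists_add_pow_prime_eq hp
  rw [hr, hE, zero_mul, zero_mul, zero_mul, add_zero]

theorem sub_pow_prime_of_natCast_eq_zero (hp : p.Prime) (hE : (p : E) = 0) {a b : E}
    (h : Commute a b) : (a - b) ^ p = a ^ p - b ^ p := by
  rw [eq_sub_iff_add_eq, ← add_pow_prime_of_natCast_eq_zero hp hE (h.sub_left (.refl b)),
    sub_add_cancel]

theorem natCast_factorial_pred_prime (hp : p.Prime) (hE : (p : E) = 0) :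
    ((p - 1).factorial : E) = -1 := by
  have := Fact.mk hp
  have hdvd : p ∣ (p - 1).factorial + 1 := by
    rw [← ZMod.natCast_eq_zero_iff, Nat.cast_add, ZMod.wilsons_lemma, Nat.cast_one,
      neg_add_cancel]
  obtain ⟨c, hc⟩ := hdvd
  have hcast := congrArg (Nat.cast : ℕ → E) hc
  rw [Nat.cast_add, Nat.cast_one, Nat.cast_mul, hE, zero_mul] at hcast
  exact eq_neg_of_add_eq_zero_left hcast

theorem ad_pow_prime (hp : p.Prime) (hE : (p : E) = 0) (D : E) :
    LieAlgebra.ad ℤ E D ^ p = LieAlgebra.ad ℤ E (D ^ p) := by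
  have hEnd : (p : Module.End ℤ E) = 0 := by
    ext u
    rw [Module.End.natCast_apply, nsmul_eq_mul, hE, zero_mul, LinearMap.zero_apply]
  have had (e : E) : LieAlgebra.ad ℤ E e = LinearMap.mulLeft ℤ e - LinearMap.mulRight ℤ e := rfl
  rw [had, had, sub_pow_prime_of_natCast_eq_zero hp hEnd (LinearMap.commute_mulLeft_right D D),
    LinearMap.pow_mulLeft, LinearMap.pow_mulRight]

theorem commute_ad_pow_pred_prime (hp : p.Prime) (hE : (p : E) = 0) {D : E} (hD : D ^ p = 0)
    (h : E) : Commute D ((LieAlgebra.ad ℤ E D ^ (p - 1)) h) := by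
  rw [commute_iff_lie_eq, ← LieAlgebra.ad_apply (R := ℤ), ← Module.End.mul_apply,
    mul_pow_sub_one hp.ne_zero, ad_pow_prime hp hE, hD, map_zero, LinearMap.zero_apply]

/-- Modulo `J` the operator `ad D` differentiates polynomials in `y`, and `y` has derivative `z`, so
`p - 1` derivatives take `y ^ (p - 1)` to `(p - 1)! z ^ (p - 1)`. -/
theorem ad_pow_pred_prime_apply_add_mem (hp : p.Prime) (hE : (p : E) = 0) (J : Ideal E)
    [J.IsTwoSided] {D y z : E} (hDz : Commute D z) (hyz : Commute y z) (hJ : ⁅D, y⁆ - z ∈ J) :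
    (LieAlgebra.ad ℤ E D ^ (p - 1)) (y ^ (p - 1)) + z ^ (p - 1) ∈ J := by
  let π := Ideal.Quotient.mk J
  have hlie : ⁅π D, π y⁆ = π z := by
    rw [Ring.lie_def, ← map_mul, ← map_mul, ← map_sub, ← Ring.lie_def]
    exact Ideal.Quotient.eq.2 hJ
  have hfactorial := congrArg π (natCast_factorial_pred_prime hp hE)
  rw [map_natCast, map_neg, map_one] at hfactorial
  rw [← Ideal.Quotient.eq_zero_iff_mem, map_add, map_ad_pow_apply, map_pow,
    ad_pow_apply_pow (hlie ▸ hDz.map π) (hlie ▸ hyz.map π), hlie, nsmul_eq_mul, hfactorial,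
    neg_one_mul, map_pow, neg_add_cancel]

end Commutator

section PHomology

variable {A M : Type*} [Ring A] [AddCommGroup M] [Module A M] {p s : ℕ}

attribute [local instance] LieRing.ofAssociativeRing

/-- The homology `ker D ^ s / im D ^ (p - s)` of an endomorphism `D`, which is meant to satisfy
`D ^ p = 0`. In general, `im D ^ (p - s)` is replaced by its intersection with `ker D ^ s`. -/
abbrev PHomology (D : Module.End A M) (p s : ℕ) : Type _ :=
  LinearMap.ker (D ^ s) ⧸ (LinearMap.range (D ^ (p - s))).submoduleOf (LinearMap.ker (D ^ s))

theorem ad_pow_pred_apply_mem_range (D h : Module.End A M) (hs : s ≤ p) {w : M}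
    (hw : (D ^ s) w = 0) :
    (LieAlgebra.ad ℤ (Module.End A M) D ^ (p - 1)) h w ∈ LinearMap.range (D ^ (p - s)) := by
  rw [ad_pow_apply_eq_sum, LinearMap.sum_apply]
  refine sum_mem fun i _ => nsmul_mem ?_ _
  obtain hi | hi := le_or_gt (p - s) i
  · rw [mul_assoc, ← Nat.add_sub_cancel' hi, pow_add, mul_assoc]
    exact LinearMap.mem_range_self _ _
  · have hzero : ((-D) ^ (p - 1 - i)) w = 0 := by
      rw [neg_pow, show p - 1 - i = p - 1 - i - s + s by omega, pow_add D, Module.End.mul_apply,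
        Module.End.mul_apply, hw, map_zero, map_zero]
    rw [Module.End.mul_apply, hzero, map_zero]
    exact zero_mem _

theorem pow_apply_sub_pow_apply_mem {S T : Module.End A M} {Z B : Submodule A M}
    (hS : ∀ w ∈ B, S w ∈ B) (hT : ∀ w ∈ Z, T w ∈ Z) (hST : ∀ w ∈ Z, S w - T w ∈ B) (m : ℕ)
    {w : M} (hw : w ∈ Z) : (S ^ m) w - (T ^ m) w ∈ B := by
  induction m generalizing w with
  | zero => simp
  | succ m ih =>
    have hsplit : (S ^ (m + 1)) w - (T ^ (m + 1)) w =
        (S ^ m) (S w - T w) + ((S ^ m) (T w) - (T ^ m) (T w)) := by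
      rw [pow_succ, pow_succ, Module.End.mul_apply, Module.End.mul_apply, map_sub,
        sub_add_sub_cancel]
    rw [hsplit]
    exact add_mem (Module.End.pow_apply_mem_of_forall_mem m hS _ (hST w hw)) (ih (hT w hw))

theorem apply_mem_ker_of_commute {S D : Module.End A M} (h : Commute S D) {w : M}
    (hw : w ∈ LinearMap.ker D) : S w ∈ LinearMap.ker D := by
  rw [LinearMap.mem_ker, ← Module.End.mul_apply, ← h.eq, Module.End.mul_apply,
    LinearMap.mem_ker.1 hw, map_zero]

theorem apply_mem_range_of_commute {S D : Module.End A M} (h : Commute S D) {w : M}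
    (hw : w ∈ LinearMap.range D) : S w ∈ LinearMap.range D := by
  obtain ⟨v, rfl⟩ := hw
  exact ⟨S v, by rw [← Module.End.mul_apply, ← h.eq, Module.End.mul_apply]⟩

end PHomology

section NilpotentAction

attribute [local instance] LieRing.ofAssociativeRing

/-- With `K = (ad D) ^ (p - 1) (y ^ (p - 1))`, the operator `T = K + x ^ (p - 1)` lies in `J` and
commutes with `D`. As `K` induces zero on homology, `x ^ (p - 1)` acts there as the nilpotent
`T`. -/
theorem exists_pow_smul_mem_range {A M E : Type*} [CommRing A] [AddCommGroup M] [Module A M]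
    [Ring E] [Algebra A E] {p s : ℕ} (hp : p.Prime) (hE : (p : E) = 0) {J : Ideal E} [J.IsTwoSided]
    (hJ : ∀ e ∈ J, IsNilpotent e) (φ : E →ₐ[A] Module.End A M) {D y : E} (hD : D ^ p = 0) {x : A}
    (hDy : ⁅D, y⁆ - algebraMap A E x ∈ J) (hs : s ≤ p) :
    ∃ m : ℕ, ∀ w ∈ LinearMap.ker (φ D ^ s), x ^ m • w ∈ LinearMap.range (φ D ^ (p - s)) := by
  let K := (LieAlgebra.ad ℤ E D ^ (p - 1)) (y ^ (p - 1))
  let z := algebraMap A E x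
  have hz (e : E) : Commute e z := (Algebra.commutes x e).symm
  obtain ⟨N, hN⟩ := hJ (K + z ^ (p - 1))
    (ad_pow_pred_prime_apply_add_mem hp hE J (hz D) (hz y) hDy)
  have hDT : Commute D (K + z ^ (p - 1)) :=
    (commute_ad_pow_pred_prime hp hE hD _).add_right ((hz D).pow_right _)
  refine ⟨(p - 1) * N, fun w hw => ?_⟩
  have hmem : (φ (z ^ (p - 1)) ^ N) w - (φ (K + z ^ (p - 1)) ^ N) w ∈
      LinearMap.range (φ D ^ (p - s)) := by
    refine pow_apply_sub_pow_apply_mem (Z := LinearMap.ker (φ D ^ s))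
      (fun _ => apply_mem_range_of_commute (((hz D).pow_right _).symm.map φ |>.pow_right _))
      (fun _ => apply_mem_ker_of_commute ((hDT.symm.map φ).pow_right _)) (fun v hv => ?_) N hw
    rw [map_add, LinearMap.add_apply, sub_add_cancel_right, ← RingHom.coe_coe φ,
      map_ad_pow_apply]
    exact neg_mem (ad_pow_pred_apply_mem_range _ _ hs hv)
  have hzx : φ (z ^ (p - 1)) ^ N = algebraMap A _ (x ^ ((p - 1) * N)) := by
    rw [map_pow, AlgHom.commutes, ← pow_mul, map_pow]
  rwa [← map_pow φ (K + z ^ (p - 1)), hN, map_zero, LinearMap.zero_apply, sub_zero, hzx,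
    Module.algebraMap_end_apply] at hmem

end NilpotentAction

section Filtration

variable {A M : Type*} [CommRing A] [AddCommGroup M] [Module A M]

/-- The algebra of endomorphisms which preserve each step of a filtration `F`. -/
def filtrationEnd (F : ℕ → Submodule A M) : Subalgebra A (Module.End A M) where
  carrier := {T | ∀ j, ∀ w ∈ F j, T w ∈ F j}
  mul_mem' hS hT j w hw := hS j _ (hT j w hw)
  add_mem' hS hT j w hw := add_mem (hS j w hw) (hT j w hw)
  algebraMap_mem' a j _ hw := (F j).smul_mem a hw

/-- The ideal of endomorphisms which map each step of a descending filtration `F` into the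
next one. -/
def filtrationShift (F : ℕ → Submodule A M) : Ideal (filtrationEnd F) where
  carrier := {T | ∀ j, ∀ w ∈ F j, T.1 w ∈ F (j + 1)}
  add_mem' hS hT j w hw := add_mem (hS j w hw) (hT j w hw)
  zero_mem' j _ _ := zero_mem (F (j + 1))
  smul_mem' S _ hT j w hw := S.2 (j + 1) _ (hT j w hw)

instance (F : ℕ → Submodule A M) : (filtrationShift F).IsTwoSided :=
  ⟨fun T hS j w hw => hS j _ (T.2 j w hw)⟩

theorem isNilpotent_of_mem_filtrationShift {F : ℕ → Submodule A M} (h0 : F 0 = ⊤) {N : ℕ}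
    (hN : F N = ⊥) {T : filtrationEnd F} (hT : T ∈ filtrationShift F) : IsNilpotent T := by
  have hpow (j : ℕ) (w : M) : (T.1 ^ j) w ∈ F j := by
    induction j with
    | zero => simp [h0]
    | succ j ih =>
      rw [pow_succ', Module.End.mul_apply]
      exact hT j _ ih
  refine ⟨N, Subtype.ext (LinearMap.ext fun w => ?_)⟩
  simpa [hN] using hpow N w

end Filtration

section FiniteGeneration

theorem finite_of_adjoin_eq_top_of_pow_smul_eq_zero {R A M : Type*} [CommRing R] [CommRing A]
    [Algebra R A] [AddCommGroup M] [Module R M] [Module A M] [IsScalarTower R A M]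
    [Module.Finite A M] {s : Set A} (hs : s.Finite) (hA : Algebra.adjoin R s = ⊤)
    (h : ∀ a ∈ s, ∃ m : ℕ, ∀ w : M, a ^ m • w = 0) : Module.Finite R M := by
  let π := Ideal.Quotient.mkₐ R (Module.annihilator A M)
  have hint : ∀ a ∈ π '' s, IsIntegral R a := by
    rintro _ ⟨a, ha, rfl⟩
    obtain ⟨m, hm⟩ := h a ha
    have hzero : π a ^ (m + 1) = 0 := by
      rw [← map_pow]
      exact Ideal.Quotient.eq_zero_iff_mem.2
        (Module.mem_annihilator.2 fun w => by rw [pow_succ', mul_smul, hm, smul_zero])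
    exact .of_pow m.succ_pos (hzero ▸ isIntegral_zero)
  have htop : Algebra.adjoin R (π '' s) = ⊤ := by
    rw [← AlgHom.map_adjoin, hA, Algebra.map_top, AlgHom.range_eq_top]
    exact Ideal.Quotient.mkₐ_surjective R _
  have : Module.Finite R (A ⧸ Module.annihilator A M) :=
    ⟨by simpa only [htop, Algebra.top_toSubmodule] using fg_adjoin_of_finite (hs.image π) hint⟩
  let := Module.quotientAnnihilator (R := A) (M := M)
  have htorsion := Module.isTorsionBySet_annihilator A M
  have : IsScalarTower A (A ⧸ Module.annihilator A M) M := htorsion.isScalarTower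
  have : IsScalarTower R (A ⧸ Module.annihilator A M) M := htorsion.isScalarTower
  have : Module.Finite (A ⧸ Module.annihilator A M) M := .of_restrictScalars_finite A _ M
  exact .trans (A ⧸ Module.annihilator A M) M

theorem exists_fin_forall_mem_span_sub_mem (R : Type*) {A M : Type*} [Semiring R] [Ring A]
    [AddCommGroup M] [Module R M] [Module A M] [SMul R A] [IsScalarTower R A M]
    (Z B : Submodule A M) [Module.Finite R (Z ⧸ B.submoduleOf Z)] :
    ∃ (m : ℕ) (g : Fin m → M), (∀ j, g j ∈ Z) ∧
      ∀ z ∈ Z, ∃ c ∈ Submodule.span R (Set.range g), z - c ∈ B := by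
  obtain ⟨m, q, hq⟩ := Module.Finite.exists_fin (R := R) (M := Z ⧸ B.submoduleOf Z)
  choose g hg using fun j => (B.submoduleOf Z).mkQ_surjective (q j)
  refine ⟨m, fun j => g j, fun j => (g j).2, fun z hz => ?_⟩
  have hz' : (B.submoduleOf Z).mkQ ⟨z, hz⟩ ∈ Submodule.span R (Set.range q) := hq ▸ trivial
  obtain ⟨a, ha⟩ := (Submodule.mem_span_range_iff_exists_fun R).1 hz'
  refine ⟨∑ j, a j • (g j : M), sum_mem fun j _ => Submodule.smul_mem _ _
    (Submodule.subset_span ⟨j, rfl⟩), ?_⟩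
  have hmem : (⟨z, hz⟩ : Z) - ∑ j, a j • g j ∈ B.submoduleOf Z := by
    rw [← Submodule.Quotient.mk_eq_zero, ← Submodule.mkQ_apply, map_sub, ← ha, map_sum,
      sub_eq_zero]
    exact Finset.sum_congr rfl fun j _ => by rw [← hg j]; rfl
  simpa [Submodule.submoduleOf] using hmem

theorem exists_fin_ker_pow_le_range_pow_sup_span {R A M M' : Type*} [CommRing R] [CommRing A]
    [Algebra R A] [AddCommGroup M] [Module R M] [Module A M] [IsScalarTower R A M]
    [AddCommGroup M'] [Module R M'] {D : Module.End A M} {D' : Module.End R M'} (e : M' ≃ₗ[R] M)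
    (he : ∀ w, e (D' w) = D (e w)) (p s : ℕ) [Module.Finite R (PHomology D p s)] :
    ∃ (m : ℕ) (g : Fin m → M'), (∀ j, g j ∈ LinearMap.ker (D' ^ s)) ∧
      LinearMap.ker (D' ^ s) ≤
        LinearMap.range (D' ^ (p - s)) ⊔ Submodule.span R (Set.range g) := by
  have hpow (i : ℕ) (w : M') : e ((D' ^ i) w) = (D ^ i) (e w) := by
    rw [Module.End.pow_apply, Module.End.pow_apply]
    exact Function.Semiconj.iterate_right he i w
  obtain ⟨m, g, hg, hker⟩ := exists_fin_forall_mem_span_sub_mem R (LinearMap.ker (D ^ s))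
    (LinearMap.range (D ^ (p - s)))
  refine ⟨m, e.symm ∘ g, fun j => ?_, fun w hw => ?_⟩
  · rw [LinearMap.mem_ker, ← e.map_eq_zero_iff, hpow]
    simpa using hg j
  · obtain ⟨c, hc, v, hv⟩ := hker (e w) (by rw [LinearMap.mem_ker, ← hpow, hw, map_zero])
    refine Submodule.mem_sup.2 ⟨_, ⟨e.symm v, rfl⟩, e.symm c, ?_, ?_⟩
    · rw [Set.range_comp]
      exact Submodule.map_span e.symm.toLinearMap _ ▸ Submodule.mem_map_of_mem hc
    · apply e.injective
      rw [map_add, hpow, e.apply_symm_apply, e.apply_symm_apply, hv, sub_add_cancel]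

end FiniteGeneration

section Koszul

attribute [local instance] LieRing.ofAssociativeRing

variable {A E σ : Type*} [CommRing A] [Ring E] [Algebra A E] [Fintype σ]

/-- The Koszul-type differential `∑ i, x i y i + d`, in an arbitrary algebra of operators. -/
def koszul (x : σ → A) (y : σ → E) (d : E) : E :=
  ∑ i, x i • y i + d

theorem koszul_pow_prime {p : ℕ} (hp : p.Prime) (hE : (p : E) = 0) {x : σ → A} {y : σ → E}
    {d : E} (hy : ∀ i, y i ^ p = 0) (hyy : ∀ i j, Commute (y i) (y j)) (hd : d ^ p = 0)
    (hyd : ∀ i, Commute (y i) d) : koszul x y d ^ p = 0 := by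
  have hcomm (s : Finset σ) {e : E} (he : ∀ i, Commute (y i) e) :
      Commute (∑ i ∈ s, x i • y i) e :=
    Commute.sum_left _ _ _ fun i _ => (he i).smul_left _
  have hsum (s : Finset σ) : (∑ i ∈ s, x i • y i) ^ p = 0 := by
    induction s using Finset.cons_induction with
    | empty => rw [Finset.sum_empty, zero_pow hp.ne_zero]
    | cons i s hi ih =>
      rw [Finset.sum_cons, add_pow_prime_of_natCast_eq_zero hp hE
        (hcomm s fun j => ((hyy j i).smul_right _)).symm, ih, smul_pow, hy, smul_zero, zero_add]
  rw [koszul, add_pow_prime_of_natCast_eq_zero hp hE (hcomm _ hyd), hsum, hd, zero_add]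

theorem lie_koszul [DecidableEq σ] {x : σ → A} {y : σ → E} {u : E} {i : σ}
    (hu : ∀ j, u * y j = y j * u + if i = j then 1 else 0) (d : E) :
    ⁅u, koszul x y d⁆ = algebraMap A E (x i) + ⁅u, d⁆ := by
  have hterm (j : σ) : ⁅u, x j • y j⁆ = x j • ⁅u, y j⁆ := by
    rw [Ring.lie_def, mul_smul_comm, smul_mul_assoc, ← smul_sub, ← Ring.lie_def]
  have hlie (j : σ) : ⁅u, y j⁆ = if i = j then 1 else 0 := by
    rw [Ring.lie_def, hu, add_sub_cancel_left]
  rw [koszul, lie_add, lie_sum, Algebra.algebraMap_eq_smul_one]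
  simp [hterm, hlie]

theorem map_koszul {E' F : Type*} [Ring E'] [Algebra A E'] [FunLike F E E'] [AlgHomClass F A E E']
    (φ : F) (x : σ → A) (y : σ → E) (d : E) :
    φ (koszul x y d) = koszul x (fun i => φ (y i)) (φ d) := by
  simp only [koszul, map_add, map_sum, map_smul]

theorem finite_pHomology_koszul {k M : Type*} [CommRing k] [Algebra k A] [AddCommGroup M]
    [Module k M] [Module A M] [IsScalarTower k A M] [IsNoetherian A M] [DecidableEq σ] {p : ℕ}
    (hp : p.Prime) (hA : (p : A) = 0) {x : σ → A} (hx : Algebra.adjoin k (Set.range x) = ⊤)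
    {F : ℕ → Submodule A M} (h0 : F 0 = ⊤) {N : ℕ} (hN : F N = ⊥) {y δ : σ → filtrationEnd F}
    {d : filtrationEnd F} (hdF : d ∈ filtrationShift F) (hd : d ^ p = 0) (hy : ∀ i, y i ^ p = 0)
    (hyy : ∀ i j, Commute (y i) (y j)) (hyd : ∀ i, Commute (y i) d)
    (hδy : ∀ i j, δ i * y j = y j * δ i + if i = j then 1 else 0) {s : ℕ} (hs : s ≤ p) :
    Module.Finite k (PHomology (koszul x (fun i => (y i).1) d.1) p s) := by
  have hE : (p : filtrationEnd F) = 0 := by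
    rw [← map_natCast (algebraMap A (filtrationEnd F)), hA, map_zero]
  have hlie (i : σ) : ⁅koszul x y d, -δ i⁆ - algebraMap A _ (x i) ∈ filtrationShift F := by
    rw [lie_neg, lie_skew, lie_koszul (hδy i), add_sub_cancel_left]
    exact sub_mem (Ideal.mul_mem_left _ _ hdF) (Ideal.mul_mem_right _ _ hdF)
  refine finite_of_adjoin_eq_top_of_pow_smul_eq_zero (Set.finite_range x) hx
    (Set.forall_mem_range.2 fun i => ?_)
  obtain ⟨m, hm⟩ := exists_pow_smul_mem_range hp hE
    (fun _ => isNilpotent_of_mem_filtrationShift h0 hN) (filtrationEnd F).val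
    (koszul_pow_prime hp hE hy hyy hd hyd) (hlie i) hs
  rw [map_koszul (filtrationEnd F).val] at hm
  refine ⟨m, (Submodule.mkQ_surjective _).forall.2 fun w => ?_⟩
  rw [← map_smul]
  exact (Submodule.Quotient.mk_eq_zero _).2 (hm w w.2)

end Koszul

section BaseChange

variable {k A V : Type*} [CommRing k] [CommRing A] [Algebra k A] [AddCommGroup V] [Module k V]

theorem baseChange_apply_mem {P Q : Submodule k V} {T : Module.End k V}
    (hT : ∀ v ∈ P, T v ∈ Q) {w : A ⊗[k] V} (hw : w ∈ P.baseChange A) :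
    T.baseChange A w ∈ Q.baseChange A := by
  obtain ⟨t, rfl⟩ := hw
  induction t with
  | zero => simp
  | add t t' ht ht' =>
    rw [map_add, map_add]
    exact add_mem ht ht'
  | tmul a v => exact Submodule.tmul_mem_baseChange_of_mem a (hT v v.2)

variable (A)

/-- Extension of scalars for endomorphisms which preserve a filtration. -/
noncomputable def filtrationEndBaseChange (F : ℕ → Submodule k V) :
    filtrationEnd F →+* filtrationEnd fun j => (F j).baseChange A :=
  ((Module.End.baseChangeHom k A V).toRingHom.comp (filtrationEnd F).val.toRingHom).codRestrict _
    fun T j _ => baseChange_apply_mem (T.2 j)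

variable {A}

theorem filtrationEndBaseChange_mem_filtrationShift {F : ℕ → Submodule k V} {T : filtrationEnd F}
    (hT : T ∈ filtrationShift F) :
    filtrationEndBaseChange A F T ∈ filtrationShift fun j => (F j).baseChange A :=
  fun j _ => baseChange_apply_mem (hT j)

/-- The Koszul-type differential `∑ i, x i ⊗ y i + 1 ⊗ d` of `A ⊗[k] V`. -/
noncomputable abbrev koszulBaseChange {σ : Type*} [Fintype σ] (x : σ → A) (y : σ → Module.End k V)
    (d : Module.End k V) : Module.End A (A ⊗[k] V) :=
  koszul x (fun i => (y i).baseChange A) (d.baseChange A)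

theorem finite_pHomology_koszulBaseChange [IsNoetherianRing k] [Module.Finite k V] {σ : Type*}
    [Fintype σ] [DecidableEq σ] {p : ℕ} (hp : p.Prime) (hk : (p : k) = 0) {x : σ → A}
    (hx : Algebra.adjoin k (Set.range x) = ⊤) {F : ℕ → Submodule k V} (h0 : F 0 = ⊤) {N : ℕ}
    (hN : F N = ⊥) {y δ : σ → filtrationEnd F} {d : filtrationEnd F} (hdF : d ∈ filtrationShift F)
    (hd : d ^ p = 0) (hy : ∀ i, y i ^ p = 0) (hyy : ∀ i j, Commute (y i) (y j))
    (hyd : ∀ i, Commute (y i) d)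
    (hδy : ∀ i j, δ i * y j = y j * δ i + if i = j then 1 else 0) {s : ℕ} (hs : s ≤ p) :
    Module.Finite k (PHomology (koszulBaseChange x (fun i => (y i).1) d.1) p s) := by
  let ψ := filtrationEndBaseChange A F
  have : Algebra.FiniteType k A := ⟨(Set.finite_range x).toFinset, by simpa using hx⟩
  have : IsNoetherianRing A := Algebra.FiniteType.isNoetherianRing k A
  refine finite_pHomology_koszul (N := N) hp (by rw [← map_natCast (algebraMap k A), hk, map_zero])
    hx (by simp [h0]) (by simp [hN]) (y := ψ ∘ y) (δ := ψ ∘ δ)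
    (filtrationEndBaseChange_mem_filtrationShift hdF)
    (by rw [← map_pow, hd, map_zero]) (fun i => ?_)
    (fun i j => (hyy i j).map ψ) (fun i => (hyd i).map ψ) (fun i j => ?_) hs
  · rw [Function.comp_apply, ← map_pow, hy, map_zero]
  · simp only [Function.comp_apply, ← map_mul, hδy, map_add, apply_ite ψ, map_one, map_zero]

end BaseChange

section Coordinatewise

variable {k R X ι : Type*} [CommRing k] [CommRing R] [Algebra k R] [AddCommGroup X] [Module R X]
  [Module k X] [IsScalarTower k R X]

/-- The action of `k`-linear endomorphisms of `R` on the coordinates with respect to an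
`R`-basis. -/
noncomputable def coordinatewise (b : Module.Basis ι R X) : Module.End k R →+* Module.End k X where
  toFun f := (b.repr.symm.restrictScalars k).toLinearMap ∘ₗ Finsupp.mapRange.linearMap f ∘ₗ
    (b.repr.restrictScalars k).toLinearMap
  map_one' := LinearMap.ext fun v => b.repr.injective (by ext; simp)
  map_mul' f g := LinearMap.ext fun v => b.repr.injective (by ext; simp)
  map_zero' := LinearMap.ext fun v => b.repr.injective (by ext; simp)
  map_add' f g := LinearMap.ext fun v => b.repr.injective (by ext; simp)

theorem coordinatewise_apply (b : Module.Basis ι R X) (f : Module.End k R) (v : X) :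
    coordinatewise b f v = b.repr.symm (Finsupp.mapRange f f.map_zero (b.repr v)) :=
  rfl

theorem coordinatewise_lmul (b : Module.Basis ι R X) (r : R) :
    coordinatewise b (Algebra.lmul k R r) = Algebra.lsmul k k X r := by
  ext v
  rw [coordinatewise_apply, b.repr.symm_apply_eq]
  ext a
  simp

theorem coordinatewise_apply_mem_span (b : Module.Basis ι R X) (f : Module.End k R) {I : Set ι}
    {v : X} (hv : v ∈ Submodule.span R (b '' I)) :
    coordinatewise b f v ∈ Submodule.span R (b '' I) := by
  rw [b.mem_span_image] at hv ⊢
  rw [coordinatewise_apply, b.repr.apply_symm_apply]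
  exact (Finset.coe_subset.2 Finsupp.support_mapRange).trans hv

variable (k) in
/-- The descending filtration of a free `R`-module by the spans of the basis vectors of degree at
most `B - j`, regarded as a filtration by `k`-submodules. -/
def degreeFiltration (b : Module.Basis ι R X) (deg : ι → ℤ) (B : ℤ) (j : ℕ) : Submodule k X :=
  (Submodule.span R (b '' {a | deg a ≤ B - j})).restrictScalars k

theorem degreeFiltration_zero (b : Module.Basis ι R X) {deg : ι → ℤ} {B : ℤ}
    (hB : ∀ a, deg a ≤ B) : degreeFiltration k b deg B 0 = ⊤ := by
  simp [degreeFiltration, hB, b.span_eq]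

theorem degreeFiltration_eq_bot (b : Module.Basis ι R X) {deg : ι → ℤ} {B : ℤ} {N : ℕ}
    (hN : ∀ a, B - N < deg a) : degreeFiltration k b deg B N = ⊥ := by
  simp [degreeFiltration, fun a => not_le.2 (hN a)]

theorem degreeFiltration_antitone (b : Module.Basis ι R X) (deg : ι → ℤ) (B : ℤ) :
    Antitone (degreeFiltration k b deg B) := fun i j hij =>
  Submodule.span_mono (Set.image_mono fun a ha => by
    simp only [Set.mem_ofPred_eq] at ha ⊢
    omega)

theorem apply_mem_degreeFiltration_succ {b : Module.Basis ι R X} {deg : ι → ℤ} {d : Module.End R X}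
    (hd : ∀ a, d (b a) ∈ Submodule.span R (b '' {a' | deg a' < deg a})) {B : ℤ} {j : ℕ} {v : X}
    (hv : v ∈ degreeFiltration k b deg B j) : d v ∈ degreeFiltration k b deg B (j + 1) := by
  refine (Submodule.span_le (p := (Submodule.span R _).comap d)).2 ?_ hv
  rintro _ ⟨a, ha, rfl⟩
  refine Submodule.span_mono (Set.image_mono fun a' ha' => ?_) (hd a)
  simp only [Set.mem_ofPred_eq] at ha ha' ⊢
  omega

theorem finite_pHomology_koszulBaseChange_of_basis [IsNoetherianRing k] [Module.Finite k R]
    [Finite ι] {A : Type*} [CommRing A] [Algebra k A] {σ : Type*} [Fintype σ] [DecidableEq σ]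
    {p : ℕ} (hp : p.Prime) (hk : (p : k) = 0) {x : σ → A}
    (hx : Algebra.adjoin k (Set.range x) = ⊤) {y : σ → R} (hy : ∀ i, y i ^ p = 0)
    {δ : σ → Module.End k R}
    (hδ : ∀ i j, δ i * Algebra.lmul k R (y j) =
      Algebra.lmul k R (y j) * δ i + if i = j then 1 else 0)
    (b : Module.Basis ι R X) {deg : ι → ℤ} {d : Module.End R X} (hd : d ^ p = 0)
    (hdeg : ∀ a, d (b a) ∈ Submodule.span R (b '' {a' | deg a' < deg a})) {s : ℕ} (hs : s ≤ p) :
    Module.Finite k (PHomology (koszulBaseChange x (fun i => Algebra.lsmul k k X (y i))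
      (d.restrictScalars k)) p s) := by
  have : Module.Finite R X := .of_basis b
  have : Module.Finite k X := .trans R X
  obtain ⟨B, hB⟩ := (Set.finite_range deg).bddAbove
  obtain ⟨L, hL⟩ := (Set.finite_range deg).bddBelow
  rw [mem_upperBounds, Set.forall_mem_range] at hB
  rw [mem_lowerBounds, Set.forall_mem_range] at hL
  let F := degreeFiltration k b deg B
  let ψ : Module.End k R →+* filtrationEnd F :=
    (coordinatewise b).codRestrict _ fun f _ _ => coordinatewise_apply_mem_span b f
  have hψ (i : σ) : (ψ (Algebra.lmul k R (y i))).1 = Algebra.lsmul k k X (y i) :=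
    coordinatewise_lmul b (y i)
  let dF : filtrationEnd F := ⟨d.restrictScalars k, fun j _ hv =>
    degreeFiltration_antitone b deg B j.le_succ (apply_mem_degreeFiltration_succ hdeg hv)⟩
  rw [← funext hψ]
  refine finite_pHomology_koszulBaseChange (N := (B - L + 1).toNat) (d := dF)
    (y := fun i => ψ (Algebra.lmul k R (y i))) (δ := fun i => ψ (δ i)) hp hk hx
    (degreeFiltration_zero b hB)
    (degreeFiltration_eq_bot b fun a => by have := hL a; omega)
    (fun _ _ => apply_mem_degreeFiltration_succ hdeg)
    (Subtype.ext (LinearMap.ext fun v => ?_))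
    (fun i => by rw [← map_pow, ← map_pow, hy, map_zero, map_zero])
    (fun i j => ((Commute.all _ _).map (Algebra.lmul k R)).map ψ)
    (fun i => Subtype.ext (LinearMap.ext fun v => ?_))
    (fun i j => by simp only [← map_mul, hδ, map_add, apply_ite ψ, map_one, map_zero]) hs
  · simpa [dF, Module.End.pow_apply] using LinearMap.congr_fun hd v
  · change (ψ _).1 (d v) = d ((ψ _).1 v)
    rw [hψ]
    exact (d.map_smul _ _).symm

end Coordinatewise

section GroupRing

variable {p n : ℕ} {k : Type} [Field k] [CharP k p]

/-- The element `yᵢ = eᵢ - 1` of the group ring. -/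
noncomputable abbrev groupRingY (p : ℕ) {n : ℕ} (k : Type) [Field k] (i : Fin n) :
    GroupRing p n k :=
  AddMonoidAlgebra.single (Pi.single i 1) 1 - 1

theorem groupRingY_pow_prime (hp : p.Prime) (i : Fin n) : groupRingY p k i ^ p = 0 := by
  have hR : (p : GroupRing p n k) = 0 := by
    rw [← map_natCast (algebraMap k _), CharP.cast_eq_zero, map_zero]
  rw [sub_pow_prime_of_natCast_eq_zero hp hR (.one_right _), AddMonoidAlgebra.single_pow, one_pow,
    one_pow, ← Pi.single_smul, nsmul_one, CharP.cast_eq_zero, Pi.single_zero,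
    ← AddMonoidAlgebra.one_def, sub_self]

/-- The derivation `∂/∂yᵢ` of the group ring, which sends `g` to `gᵢ • (g - eᵢ)` since
`eᵢ = 1 + yᵢ`. -/
noncomputable def groupRingDeriv (i : Fin n) : Module.End k (GroupRing p n k) :=
  (AddMonoidAlgebra.basis (Fin n → ZMod p) k).constr k fun g =>
    AddMonoidAlgebra.single (g - Pi.single i 1) (ZMod.castHom dvd_rfl k (g i))

theorem groupRingDeriv_single (i : Fin n) (g : Fin n → ZMod p) :
    groupRingDeriv i (AddMonoidAlgebra.single g (1 : k)) =
      AddMonoidAlgebra.single (g - Pi.single i 1) (ZMod.castHom dvd_rfl k (g i)) := by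
  rw [groupRingDeriv, ← AddMonoidAlgebra.basis_apply, Module.Basis.constr_basis]

theorem groupRingDeriv_mul_lmul (i j : Fin n) :
    groupRingDeriv i * Algebra.lmul k (GroupRing p n k) (groupRingY p k j) =
      Algebra.lmul k _ (groupRingY p k j) * groupRingDeriv i + if i = j then 1 else 0 := by
  refine (AddMonoidAlgebra.basis (Fin n → ZMod p) k).ext fun g => ?_
  simp only [AddMonoidAlgebra.basis_apply, LinearMap.add_apply, Module.End.mul_apply,
    Algebra.coe_lmul_eq_mul, LinearMap.mul_apply']
  simp only [sub_mul, one_mul, AddMonoidAlgebra.single_mul_single, map_sub, groupRingDeriv_single,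
    Pi.add_apply, map_add]
  split_ifs with hij
  · subst hij
    simp [add_sub_assoc, AddMonoidAlgebra.single_add]
    abel
  · simp [Pi.single_eq_of_ne hij, add_sub_assoc]

end GroupRing

section Grading

theorem le_span_image_of_isInternal {R X ι J : Type*} [Ring R] [AddCommGroup X] [Module R X]
    [DecidableEq J] {gr : J → Submodule R X} (hgr : DirectSum.IsInternal gr) {deg : ι → J}
    (b : Module.Basis ι R X) (hb : ∀ a, b a ∈ gr (deg a)) (m : J) :
    gr m ≤ Submodule.span R (b '' {a | deg a = m}) := by
  intro x hx
  have hx' : x ∈ Submodule.span R (b '' {a | deg a = m}) ⊔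
      Submodule.span R (b '' {a | deg a = m}ᶜ) := by
    rw [← Submodule.span_union, ← Set.image_union, Set.union_compl_self, Set.image_univ,
      b.span_eq]
    trivial
  obtain ⟨u, hu, v, hv, rfl⟩ := Submodule.mem_sup.1 hx'
  have hum : u ∈ gr m := by
    refine Submodule.span_le.2 ?_ hu
    rintro _ ⟨a, rfl, rfl⟩
    exact hb a
  have hvm : v ∈ ⨆ j ≠ m, gr j := by
    refine Submodule.span_le.2 ?_ hv
    rintro _ ⟨a, ha, rfl⟩
    exact Submodule.mem_iSup_of_mem (deg a) (Submodule.mem_iSup_of_mem ha (hb a))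
  have hv0 : v = 0 := Submodule.disjoint_def.1 (hgr.submodule_iSupIndep m) v
    ((Submodule.add_mem_iff_right _ hum).1 hx) hvm
  rwa [hv0, add_zero]

end Grading

section Beta

variable {p n N : ℕ} {k : Type} [Field k] (C : KGCx p n k N)

theorem d_basis_mem_span_deg_lt {ι : Type*} {deg : ι → ℤ}
    (b : Module.Basis ι (GroupRing p n k) C.X) (hb : ∀ a, b a ∈ C.gr (deg a)) (a : ι) :
    C.d (b a) ∈ Submodule.span (GroupRing p n k) (b '' {a' | deg a' < deg a}) := by
  refine Submodule.span_mono (Set.image_mono fun a' ha' => ?_)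
    (le_span_image_of_isInternal C.internal b hb _ (C.d_deg _ _ (hb a)))
  simp only [Set.mem_ofPred_eq] at ha' ⊢
  omega

theorem comm_betaD (t : C.X ⊗[k] PolyA n k) :
    TensorProduct.comm k C.X (PolyA n k) (betaD C t) =
      koszulBaseChange MvPolynomial.X (fun i => Algebra.lsmul k k C.X (groupRingY p k i))
        (C.d.restrictScalars k) (TensorProduct.comm k C.X (PolyA n k) t) := by
  induction t with
  | zero => simp
  | add t t' ht ht' => simp only [map_add, ht, ht']
  | tmul c f =>
    simp [betaD, koszul, LinearMap.sum_apply, TensorProduct.smul_tmul', sub_smul,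
      TensorProduct.tmul_sub, smul_sub, add_comm]

end Beta

theorem stmt_14 (p n : ℕ) (hp : p.Prime) (k : Type) [Field k] [CharP k p]
    (C : KGCx p n k p)
    -- `C` is free and finitely generated over `k[G]`:
    (hfree : C.IsPerfect) :
    -- `dim_k ₛH(β(C)) < ∞`: the homology `ker d^s / im d^{p-s}` is finite-dimensional, i.e.
    -- finitely many cycles generate it:
    ∀ s : ℕ, 1 ≤ s → s ≤ p - 1 →
      ∃ (m : ℕ) (g : Fin m → (C.X ⊗[k] PolyA n k)),
        (∀ j, g j ∈ LinearMap.ker (betaD C ^ s)) ∧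
        LinearMap.ker (betaD C ^ s) ≤
          LinearMap.range (betaD C ^ (p - s)) ⊔ Submodule.span k (Set.range g) := by
  intro s _ hs
  obtain ⟨ι, _, deg, b, hb⟩ := hfree
  have := Fact.mk hp
  have : Module.Finite k (GroupRing p n k) :=
    .of_basis (AddMonoidAlgebra.basis (Fin n → ZMod p) k)
  have := finite_pHomology_koszulBaseChange_of_basis hp (CharP.cast_eq_zero k p)
    (MvPolynomial.adjoin_range_X (R := k)) (groupRingY_pow_prime hp) groupRingDeriv_mul_lmul b
    C.d_pow (d_basis_mem_span_deg_lt C b hb) (hs.trans p.pred_le)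
  exact exists_fin_ker_pow_le_range_pow_sup_span (TensorProduct.comm k C.X (PolyA n k))
    (comm_betaD C) p s
end

section
/- Let p be a prime, k a field of characteristic p, and A = k[x_1,…,x_n] graded by deg(x_i) = −1. Let M be a free p-DG A-module such that M_n = 0 for all sufficiently large n. If {}_sH_•(M⊗_A k) = 0 for some 1 ≤ s ≤ p−1, then M is contractible, i.e. the zero map M → 0 is a homotopy equivalence of p-DG A-modules (equivalently, the identity of M is homotopic to 0). -/
/-- A `p`-DG module over `A = k[x_1,…,x_n]` with `deg x_i = -1`: a graded `A`-module together
with an `A`-linear differential of degree `-1` satisfying `d ^ p = 0`. -/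
structure PDG (p n : ℕ) (k : Type) [Field k] : Type 1 where
  X : Type
  [acg : AddCommGroup X]
  [modA : Module (PolyA n k) X]
  [modk : Module k X]
  [tower : IsScalarTower k (PolyA n k) X]
  d : X →ₗ[PolyA n k] X
  gr : ℤ → Submodule k X
  internal : DirectSum.IsInternal gr
  x_deg : ∀ (i : Fin n) (m : ℤ), ∀ x ∈ gr m, (MvPolynomial.X i : PolyA n k) • x ∈ gr (m - 1)
  d_deg : ∀ m : ℤ, ∀ x ∈ gr m, d x ∈ gr (m - 1)
  d_pow : d ^ p = 0

attribute [instance] PDG.acg PDG.modA PDG.modk PDG.tower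

namespace PDG
variable {p n : ℕ} {k : Type} [Field k] (M : PDG p n k)

/-- `M` is free as a graded `A`-module: it has a homogeneous `A`-basis. -/
def IsFree : Prop :=
  ∃ (ι : Type) (deg : ι → ℤ) (b : Module.Basis ι (PolyA n k) M.X), ∀ a, b a ∈ M.gr (deg a)

/-- `M` is free and finitely generated as a graded `A`-module. -/
def IsFreeFG : Prop :=
  ∃ (ι : Type) (_ : Fintype ι) (deg : ι → ℤ) (b : Module.Basis ι (PolyA n k) M.X),
    ∀ a, b a ∈ M.gr (deg a)

/-- The submodule `(x_1,…,x_n)·M`, i.e. the kernel of `M → M ⊗_A k`. -/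
noncomputable def IM : Submodule (PolyA n k) M.X :=
  (Ideal.span (Set.range (MvPolynomial.X : Fin n → PolyA n k))) • (⊤ : Submodule (PolyA n k) M.X)

/-- The differential as a `k`-linear map. -/
noncomputable def dk : M.X →ₗ[k] M.X := M.d.restrictScalars k

/-- `(x_1,…,x_n)·M` as a `k`-subspace. -/
noncomputable def IMk : Submodule k M.X := M.IM.restrictScalars k

/-- The total homology `ₛH(M) = ker d^s / im d^{p-s}` as a `k`-vector space. -/
noncomputable abbrev H (s : ℕ) : Type :=
  ↥(LinearMap.ker (M.dk ^ s)) ⧸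
    (LinearMap.range (M.dk ^ (p - s))).comap (LinearMap.ker (M.dk ^ s)).subtype

/-- The total homology `ₛH(M ⊗_A k)` as a `k`-vector space, presented as the subquotient
`ker(d̄^s) / im(d̄^{p-s})` of `M/IM` pulled back to `M`. -/
noncomputable abbrev HBar (s : ℕ) : Type :=
  ↥(Submodule.comap (M.dk ^ s) M.IMk) ⧸
    (LinearMap.range (M.dk ^ (p - s)) ⊔ M.IMk).comap (Submodule.comap (M.dk ^ s) M.IMk).subtype

/-- `ₛH(M ⊗_A k) ≠ 0`. -/
def HBarNonzero (s : ℕ) : Prop :=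
  ∃ x : M.X, (M.dk ^ s) x ∈ M.IMk ∧ x ∉ LinearMap.range (M.dk ^ (p - s)) ⊔ M.IMk

end PDG

/-! Modulo `I = (x_1,…,x_n)` everything is a vector space, and vanishing of one `ₛH(M/IM)` forces
`ker d = im d ^ (p - 1)` on `M/IM`. An inner inverse of `d ^ (p - 1)` on `M/IM` lifts to a
homogeneous `A`-linear `h` on the projective module `M`, and `φ = ∑ d ^ (p - 1 - i) h d ^ i` then
restricts to the identity of `ker d` modulo `I`. As `φ` commutes with `d` and `d ^ p = 0`, this
gives `(1 - φ) ^ p M ⊆ IM`. Multiplication by `I` lowers degrees and `M` is bounded above, so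
`1 - φ` is locally nilpotent, `φ` is invertible, and `φ⁻¹ h` contracts `M`. -/

section HomotopySum

/-- The null-homotopic element `∑_{i < p} d ^ (p - 1 - i) h d ^ i` determined by `h`, in any ring;
in an endomorphism ring this is the morphism that `h` makes homotopic to zero. -/
def homotopySum {R : Type*} [Semiring R] (p : ℕ) (d h : R) : R :=
  ∑ i ∈ Finset.range p, d ^ (p - 1 - i) * (h * d ^ i)

theorem map_homotopySum {R S : Type*} [Semiring R] [Semiring S] (π : R →+* S) (p : ℕ) (d h : R) :
    π (homotopySum p d h) = homotopySum p (π d) (π h) := by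
  simp only [homotopySum, map_sum, map_mul, map_pow]

theorem commute_homotopySum {R : Type*} [Ring R] {p : ℕ} {d : R} (hd : d ^ p = 0) (h : R) :
    Commute d (homotopySum p d h) := by
  have telescoping_term : ∀ i ∈ Finset.range p,
      d * (d ^ (p - 1 - i) * (h * d ^ i)) - d ^ (p - 1 - i) * (h * d ^ i) * d
        = d ^ (p - i) * (h * d ^ i) - d ^ (p - (i + 1)) * (h * d ^ (i + 1)) := by
    intro i hi
    have hi' := Finset.mem_range.1 hi
    rw [show p - i = (p - 1 - i) + 1 by omega, show p - (i + 1) = p - 1 - i by omega,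
      pow_succ' d (p - 1 - i), pow_succ d i]
    simp only [mul_assoc]
  rw [Commute, SemiconjBy, ← sub_eq_zero, homotopySum, Finset.mul_sum, Finset.sum_mul,
    ← Finset.sum_sub_distrib, Finset.sum_congr rfl telescoping_term,
    Finset.sum_range_sub' (fun i => d ^ (p - i) * (h * d ^ i))]
  simp [hd]

theorem homotopySum_mul_left {R : Type*} [Semiring R] (p : ℕ) {d u : R} (hu : Commute d u)
    (h : R) : homotopySum p d (u * h) = u * homotopySum p d h := by
  rw [homotopySum, homotopySum, Finset.mul_sum]
  refine Finset.sum_congr rfl fun i _ => ?_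
  rw [← mul_assoc u, ← (hu.pow_left (p - 1 - i)).eq]
  simp only [mul_assoc]

theorem homotopySum_inv_mul_eq_one {R : Type*} [Ring R] {p : ℕ} {d h : R} (hd : d ^ p = 0)
    (φ : Rˣ) (hφ : (φ : R) = homotopySum p d h) :
    homotopySum p d ((φ⁻¹ : Rˣ) * h) = 1 := by
  have hdφ : Commute d φ := hφ ▸ commute_homotopySum hd h
  rw [homotopySum_mul_left p hdφ.units_inv_right, ← hφ, φ.inv_mul]

end HomotopySum

section Endomorphisms

variable {R V : Type*} [Ring R] [AddCommGroup V] [Module R V]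

theorem ker_le_range_pow_pred_of_ker_pow_le_range_pow {d : Module.End R V} {p s : ℕ}
    (hs : 1 ≤ s) (hsp : s ≤ p - 1)
    (hexact : LinearMap.ker (d ^ s) ≤ LinearMap.range (d ^ (p - s))) :
    LinearMap.ker d ≤ LinearMap.range (d ^ (p - 1)) := by
  intro x hx
  have mem_range : ∀ j ≤ p - 1, x ∈ LinearMap.range (d ^ j) := by
    intro j
    induction j with
    | zero => exact fun _ => ⟨x, rfl⟩
    | succ j ih =>
      intro hj
      obtain ⟨y, rfl⟩ := ih (by omega)
      have hy : (d ^ (j + 1)) y = 0 := by rwa [pow_succ', Module.End.mul_apply]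
      rcases le_total (j + 1) s with hjs | hjs
      · have hys : (d ^ s) y = 0 := Module.End.pow_map_zero_of_le hjs hy
        obtain ⟨u, rfl⟩ := hexact hys
        refine ⟨(d ^ (p - s - 1)) u, ?_⟩
        simp only [← Module.End.mul_apply, ← pow_add]
        congr 2
        omega
      · have hys : (d ^ s) ((d ^ (j + 1 - s)) y) = 0 := by
          rwa [← Module.End.mul_apply, ← pow_add, Nat.add_sub_cancel' hjs]
        obtain ⟨u, hu⟩ := hexact hys
        refine ⟨(d ^ (p - 1 - (j + 1))) u, ?_⟩
        calc (d ^ (j + 1)) ((d ^ (p - 1 - (j + 1))) u)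
            = (d ^ (s - 1)) ((d ^ (p - s)) u) := by
              simp only [← Module.End.mul_apply, ← pow_add]
              congr 2
              omega
          _ = (d ^ j) y := by
              rw [hu, ← Module.End.mul_apply, ← pow_add]
              congr 2
              omega
  exact mem_range (p - 1) le_rfl

theorem pow_eq_zero_of_ker_le_ker {d f : Module.End R V} {p : ℕ} (hd : d ^ p = 0)
    (hdf : Commute d f) (hker : LinearMap.ker d ≤ LinearMap.ker f) : f ^ p = 0 := by
  have ker_pow_le : ∀ j, LinearMap.ker (d ^ j) ≤ LinearMap.ker (f ^ j) := by
    intro j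
    induction j with
    | zero => exact le_rfl
    | succ j ih =>
      intro x hx
      have hdx : (d ^ j) (d x) = 0 := by rwa [← Module.End.mul_apply, ← pow_succ]
      have hfdx : d ((f ^ j) x) = 0 := by
        rw [← Module.End.mul_apply, (hdf.pow_right j).eq]
        exact ih hdx
      rw [LinearMap.mem_ker, pow_succ', Module.End.mul_apply]
      exact hker hfdx
  rw [← LinearMap.ker_eq_top, ← top_le_iff]
  simpa [hd] using ker_pow_le p

theorem one_sub_homotopySum_pow_eq_zero {d h : Module.End R V} {p : ℕ} (hp : 0 < p)
    (hd : d ^ p = 0) (hexact : LinearMap.ker d ≤ LinearMap.range (d ^ (p - 1)))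
    (hinner : d ^ (p - 1) * h * d ^ (p - 1) = d ^ (p - 1)) :
    (1 - homotopySum p d h) ^ p = 0 := by
  refine pow_eq_zero_of_ker_le_ker hd ((Commute.one_right d).sub_right (commute_homotopySum hd h))
    fun x hx => ?_
  have sum_eq : homotopySum p d h x = (d ^ (p - 1)) (h x) := by
    rw [homotopySum, LinearMap.sum_apply, Finset.sum_eq_single_of_mem 0 (Finset.mem_range.2 hp)]
    · simp
    · intro i _ hi
      have hdix : (d ^ i) x = 0 :=
        Module.End.pow_map_zero_of_le (Nat.one_le_iff_ne_zero.2 hi) (by simpa using hx)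
      simp [hdix]
  obtain ⟨y, rfl⟩ := hexact hx
  rw [LinearMap.mem_ker, LinearMap.sub_apply, Module.End.one_apply, sum_eq, sub_eq_zero]
  exact (LinearMap.congr_fun hinner y).symm

theorem bijective_one_sub_of_locally_nilpotent (f : Module.End R V)
    (hf : ∀ x, ∃ r, (f ^ r) x = 0) : Function.Bijective (1 - f : Module.End R V) := by
  constructor
  · rw [injective_iff_map_eq_zero]
    intro x hx
    have hfix : f x = x := (sub_eq_zero.1 hx).symm
    obtain ⟨r, hr⟩ := hf x
    rwa [Module.End.pow_apply, Function.iterate_fixed hfix] at hr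
  · intro x
    obtain ⟨r, hr⟩ := hf x
    refine ⟨(∑ j ∈ Finset.range r, f ^ j) x, ?_⟩
    rw [← Module.End.mul_apply, mul_neg_geom_sum]
    simp [hr]

theorem exists_mul_mul_eq_self {K V : Type*} [DivisionRing K] [AddCommGroup V] [Module K V]
    (f : Module.End K V) : ∃ g : Module.End K V, f * g * f = f := by
  obtain ⟨t, ht⟩ := f.rangeRestrict.exists_rightInverse_of_surjective f.range_rangeRestrict
  obtain ⟨g, hg⟩ := LinearMap.exists_extend t
  refine ⟨g, LinearMap.ext fun x => ?_⟩
  have hgf : g (f x) = t (f.rangeRestrict x) := LinearMap.congr_fun hg (f.rangeRestrict x)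
  rw [Module.End.mul_apply, Module.End.mul_apply, hgf]
  exact congrArg Subtype.val (LinearMap.congr_fun ht (f.rangeRestrict x))

end Endomorphisms

section ReductionModuloIdeal

variable {R M : Type*} [CommRing R] [AddCommGroup M] [Module R M] (I : Ideal R)

variable (M) in
/-- Reduction `f ↦ f ⊗ R/I` of endomorphisms of `M` modulo `I`, as a ring homomorphism; `M ⊗ R/I`
is modelled by `M ⧸ I • ⊤`. -/
noncomputable def reduceEndModIdeal :
    Module.End R M →+* Module.End (R ⧸ I) (M ⧸ (I • ⊤ : Submodule R M)) where
  toFun f := f.reduceModIdeal I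
  map_one' := LinearMap.ext fun x => by
    obtain ⟨x, rfl⟩ := Submodule.Quotient.mk_surjective _ x; rfl
  map_mul' f g :=
    LinearMap.ext fun x => by obtain ⟨x, rfl⟩ := Submodule.Quotient.mk_surjective _ x; rfl
  map_zero' := LinearMap.ext fun x => by
    obtain ⟨x, rfl⟩ := Submodule.Quotient.mk_surjective _ x; rfl
  map_add' f g :=
    LinearMap.ext fun x => by obtain ⟨x, rfl⟩ := Submodule.Quotient.mk_surjective _ x; rfl

theorem reduceEndModIdeal_apply_mk (f : Module.End R M) (x : M) :
    reduceEndModIdeal M I f (Submodule.Quotient.mk x) = Submodule.Quotient.mk (f x) :=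
  rfl

variable {I}

theorem reduceEndModIdeal_eq_iff {f g : Module.End R M} :
    reduceEndModIdeal M I f = reduceEndModIdeal M I g ↔
      ∀ x, f x - g x ∈ (I • ⊤ : Submodule R M) := by
  simp only [LinearMap.ext_iff, (Submodule.Quotient.mk_surjective _).forall,
    reduceEndModIdeal_apply_mk, Submodule.Quotient.eq]

variable (I) in
theorem reduceEndModIdeal_surjective [Module.Projective R M] :
    Function.Surjective (reduceEndModIdeal M I) := by
  intro g
  let mk := (I • ⊤ : Submodule R M).mkQ
  obtain ⟨f, hf⟩ := Module.projective_lifting_property mk (g.restrictScalars R ∘ₗ mk)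
    (Submodule.mkQ_surjective _)
  refine ⟨f, LinearMap.ext fun x => ?_⟩
  obtain ⟨x, rfl⟩ := Submodule.Quotient.mk_surjective _ x
  exact LinearMap.congr_fun hf x

variable (I) in
theorem exists_reduceEndModIdeal_mul_mul_eq [I.IsMaximal] [Module.Projective R M]
    (f : Module.End R M) :
    ∃ g, reduceEndModIdeal M I (f * g * f) = reduceEndModIdeal M I f := by
  let := Ideal.Quotient.field I
  obtain ⟨g, hg⟩ := exists_mul_mul_eq_self (reduceEndModIdeal M I f)
  obtain ⟨g, rfl⟩ := reduceEndModIdeal_surjective I g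
  exact ⟨g, by rw [map_mul, map_mul, hg]⟩

theorem pow_apply_mem_pow_smul_top {f : Module.End R M}
    (hf : ∀ x, f x ∈ (I • ⊤ : Submodule R M)) (j : ℕ) (x : M) :
    (f ^ j) x ∈ (I ^ j • ⊤ : Submodule R M) := by
  induction j with
  | zero => simp
  | succ j ih =>
    have hmap : Submodule.map f (I ^ j • ⊤) ≤ I ^ (j + 1) • ⊤ := by
      rw [Submodule.map_smul'', pow_succ, Submodule.mul_smul]
      refine Submodule.smul_mono le_rfl ?_
      rintro _ ⟨y, -, rfl⟩
      exact hf y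
    rw [pow_succ' f, Module.End.mul_apply]
    exact hmap (Submodule.mem_map_of_mem ih)

theorem span_smul_induction {S : Set R} {N : Submodule R M} {P : M → Prop} (zero : P 0)
    (add : ∀ y z, P y → P z → P (y + z)) (smul : ∀ r ∈ S, ∀ y ∈ N, P (r • y)) {x : M}
    (hx : x ∈ Ideal.span S • N) : P x := by
  refine Submodule.smul_induction_on hx (fun a ha y hy => ?_) add
  induction ha using Submodule.span_induction generalizing y with
  | mem r hr => exact smul r hr y hy
  | zero => rwa [zero_smul]
  | add r r' _ _ ih ih' => rw [add_smul]; exact add _ _ (ih y hy) (ih' y hy)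
  | smul a r _ ih =>
    rw [smul_eq_mul, mul_comm, mul_smul]
    exact ih (a • y) (N.smul_mem a hy)

end ReductionModuloIdeal

section Polynomials

theorem idealOfVars_eq_ker_constantCoeff (σ R : Type*) [CommRing R] :
    MvPolynomial.idealOfVars σ R = RingHom.ker MvPolynomial.constantCoeff := by
  ext q
  simpa [MvPolynomial.constantCoeff_eq, Finsupp.degree_eq_zero_iff] using
    MvPolynomial.mem_pow_idealOfVars_iff' 1 q

instance isMaximal_idealOfVars (σ K : Type*) [Field K] :
    (MvPolynomial.idealOfVars σ K).IsMaximal := by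
  rw [idealOfVars_eq_ker_constantCoeff]
  exact RingHom.ker_isMaximal_of_surjective _ fun c => ⟨_, MvPolynomial.constantCoeff_C σ c⟩

theorem map_mvPolynomial_smul_of_map_X_smul {σ k V : Type*} [CommSemiring k] [AddCommMonoid V]
    [Module k V] [Module (MvPolynomial σ k) V] [IsScalarTower k (MvPolynomial σ k) V]
    (f : V →ₗ[k] V)
    (hf : ∀ i x, f ((MvPolynomial.X i : MvPolynomial σ k) • x) =
      (MvPolynomial.X i : MvPolynomial σ k) • f x)
    (q : MvPolynomial σ k) (x : V) : f (q • x) = q • f x := by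
  induction q using MvPolynomial.induction_on generalizing x with
  | C c => rw [← MvPolynomial.algebraMap_eq, algebraMap_smul, algebraMap_smul, map_smul]
  | add q r hq hr => rw [add_smul, add_smul, map_add, hq, hr]
  | mul_X q i hq => rw [mul_smul, mul_smul, hq, hf]

end Polynomials

section HomogeneousMaps

variable {ι k V : Type*} [AddCommGroup ι] [Ring k] [AddCommGroup V] [Module k V]

/-- A map of a graded module to itself is homogeneous of degree `c` if it raises the degree of
homogeneous elements by `c`. It is a property of plain functions, so that it applies to linear
maps over any ring. -/
def IsHomogeneousMap (𝒱 : ι → Submodule k V) (c : ι) (f : V → V) : Prop :=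
  ∀ m, ∀ x ∈ 𝒱 m, f x ∈ 𝒱 (m + c)

variable {𝒱 : ι → Submodule k V} {c e : ι}

namespace IsHomogeneousMap

theorem comp {f g : V → V} (hf : IsHomogeneousMap 𝒱 c f) (hg : IsHomogeneousMap 𝒱 e g) :
    IsHomogeneousMap 𝒱 (e + c) (f ∘ g) := fun m x hx => by
  rw [← add_assoc]
  exact hf _ _ (hg m x hx)

theorem iterate {f : V → V} (hf : IsHomogeneousMap 𝒱 c f) (j : ℕ) :
    IsHomogeneousMap 𝒱 (j • c) f^[j] := by
  induction j with
  | zero => intro m x hx; simpa using hx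
  | succ j ih =>
    rw [Function.iterate_succ', succ_nsmul]
    exact hf.comp ih

variable [DecidableEq ι] [DirectSum.Decomposition 𝒱]

theorem decompose_apply {F : Type*} [FunLike F V V] [AddMonoidHomClass F V V] {f : F}
    (hf : IsHomogeneousMap 𝒱 c f) (m : ι) (x : V) :
    (DirectSum.decompose 𝒱 (f x) (m + c) : V) = f (DirectSum.decompose 𝒱 x m) := by
  induction x using DirectSum.Decomposition.inductionOn 𝒱 with
  | zero => simp
  | @homogeneous l x =>
    rcases eq_or_ne l m with rfl | hlm
    · rw [DirectSum.decompose_of_mem_same _ (hf l x x.2), DirectSum.decompose_of_mem_same _ x.2]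
    · rw [DirectSum.decompose_of_mem_ne _ (hf l x x.2) (by simpa using hlm),
        DirectSum.decompose_of_mem_ne _ x.2 hlm, map_zero]
  | add x y hx hy => simp [hx, hy]

theorem of_rightInverse {F : Type*} [FunLike F V V] [AddMonoidHomClass F V V] {f : F}
    (hf : IsHomogeneousMap 𝒱 0 f) (hinj : Function.Injective f) {g : V → V}
    (hfg : Function.RightInverse g f) : IsHomogeneousMap 𝒱 0 g := by
  intro m x hx
  have hcomponent : (DirectSum.decompose 𝒱 (g x) m : V) = g x := hinj <| by
    rw [← hf.decompose_apply, add_zero, hfg, DirectSum.decompose_of_mem_same _ hx]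
  rw [add_zero, ← hcomponent]
  exact SetLike.coe_mem _

end IsHomogeneousMap

theorem isHomogeneousMap_homotopySum {R : Type*} [Ring R] [Module R V] {p : ℕ}
    {d h : Module.End R V} (hd : IsHomogeneousMap 𝒱 (-c) d)
    (hh : IsHomogeneousMap 𝒱 ((p - 1) • c) h) : IsHomogeneousMap 𝒱 0 ⇑(homotopySum p d h) := by
  intro m x hx
  rw [homotopySum, LinearMap.sum_apply]
  refine sum_mem fun i hi => ?_
  have hi' : p - 1 = i + (p - 1 - i) := by have := Finset.mem_range.1 hi; omega
  have hdeg : i • (-c) + (p - 1) • c + (p - 1 - i) • (-c) = 0 := by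
    conv_lhs => rw [hi']
    simp only [add_tsub_cancel_left, add_nsmul, smul_neg]
    abel
  have hterm := (hd.iterate (p - 1 - i)).comp (hh.comp (hd.iterate i)) m x hx
  rw [hdeg] at hterm
  simpa only [Module.End.mul_apply, Module.End.pow_apply, Function.comp_apply] using hterm

variable [DecidableEq ι]

variable (𝒱) in
/-- The component of degree `c` of an endomorphism of a graded module: on elements of degree `m`
it is `f` followed by the projection to degree `m + c`. -/
def homogeneousPart [DirectSum.Decomposition 𝒱] (c : ι) (f : V →ₗ[k] V) : V →ₗ[k] V :=
  DirectSum.toModule k ι V (fun m => (𝒱 (m + c)).subtype ∘ₗ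
      DirectSum.component k ι (fun i => 𝒱 i) (m + c) ∘ₗ
      (DirectSum.decomposeLinearEquiv 𝒱).toLinearMap ∘ₗ f ∘ₗ (𝒱 m).subtype) ∘ₗ
    (DirectSum.decomposeLinearEquiv 𝒱).toLinearMap

variable [DirectSum.Decomposition 𝒱]

theorem homogeneousPart_apply_of_mem (f : V →ₗ[k] V) {m : ι} {x : V} (hx : x ∈ 𝒱 m) :
    homogeneousPart 𝒱 c f x = DirectSum.decompose 𝒱 (f x) (m + c) := by
  lift x to 𝒱 m using hx
  simp only [homogeneousPart, LinearMap.comp_apply, LinearEquiv.coe_coe,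
    DirectSum.decomposeLinearEquiv_apply, DirectSum.decompose_coe]
  rw [← DirectSum.lof_eq_of k, DirectSum.toModule_lof]
  rfl

theorem isHomogeneousMap_homogeneousPart (f : V →ₗ[k] V) :
    IsHomogeneousMap 𝒱 c (homogeneousPart 𝒱 c f) := fun m x hx => by
  rw [homogeneousPart_apply_of_mem f hx]
  exact SetLike.coe_mem _

theorem homogeneousPart_map_of_map_comm {F : Type*} [FunLike F V V] [AddMonoidHomClass F V V]
    {f : V →ₗ[k] V} {g : F} (hg : IsHomogeneousMap 𝒱 e g) (hfg : ∀ x, f (g x) = g (f x)) (x : V) :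
    homogeneousPart 𝒱 c f (g x) = g (homogeneousPart 𝒱 c f x) := by
  induction x using DirectSum.Decomposition.inductionOn 𝒱 with
  | zero => simp
  | @homogeneous m x =>
    rw [homogeneousPart_apply_of_mem f (hg m x x.2), homogeneousPart_apply_of_mem f x.2, hfg,
      ← hg.decompose_apply, add_right_comm]
  | add x y hx hy => simp only [map_add, hx, hy]

theorem map_homogeneousPart_map_sub_mem {W : Submodule k V}
    (hW : DirectSum.SetLike.IsHomogeneous 𝒱 W) {F : Type*} [FunLike F V V] [AddMonoidHomClass F V V]
    {f : V →ₗ[k] V} {g : F} (hg : IsHomogeneousMap 𝒱 (-c) g)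
    (hfg : ∀ x, g (f (g x)) - g x ∈ W) (x : V) : g (homogeneousPart 𝒱 c f (g x)) - g x ∈ W := by
  induction x using DirectSum.Decomposition.inductionOn 𝒱 with
  | zero => simp
  | @homogeneous m x =>
    have hgx := hg m x x.2
    have hcomponent := hW (m + -c) (hfg x)
    rw [homogeneousPart_apply_of_mem f hgx, ← hg.decompose_apply, neg_add_cancel_right]
    rwa [DirectSum.decompose_sub, DirectSum.sub_apply, AddSubgroupClass.coe_sub,
      DirectSum.decompose_of_mem_same _ hgx] at hcomponent
  | add x y hx hy => simpa only [map_add, add_sub_add_comm] using add_mem hx hy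

end HomogeneousMaps

namespace PDG

variable {p n : ℕ} {k : Type} [Field k] {M : PDG p n k}

theorem IsFree.projective (hM : M.IsFree) : Module.Projective (PolyA n k) M.X := by
  obtain ⟨_, _, b, _⟩ := hM
  exact Module.Projective.of_basis b

variable (M)

/-- Reduction of `A`-linear endomorphisms of `M` to `M ⊗_A k`, modelled as `M/(x_1,…,x_n)M`. -/
noncomputable abbrev reduceEnd :=
  reduceEndModIdeal M.X (MvPolynomial.idealOfVars (Fin n) k)

noncomputable instance : DirectSum.Decomposition M.gr := M.internal.chooseDecomposition

theorem isHomogeneousMap_d : IsHomogeneousMap M.gr (-1) M.d := M.d_deg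

theorem isHomogeneousMap_X_smul (i : Fin n) :
    IsHomogeneousMap M.gr (-1)
      (DistribSMul.toAddMonoidHom M.X (MvPolynomial.X i : PolyA n k)) := M.x_deg i

theorem decompose_X_smul (i : Fin n) (m : ℤ) (x : M.X) :
    (DirectSum.decompose M.gr ((MvPolynomial.X i : PolyA n k) • x) m : M.X)
      = (MvPolynomial.X i : PolyA n k) • (DirectSum.decompose M.gr x (m + 1) : M.X) := by
  have h := (M.isHomogeneousMap_X_smul i).decompose_apply (m + 1) x
  rwa [add_neg_cancel_right] at h

theorem isHomogeneous_IMk : DirectSum.SetLike.IsHomogeneous M.gr M.IMk := by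
  intro m x hx
  change (DirectSum.decompose M.gr x m : M.X) ∈ M.IM
  replace hx : x ∈ Ideal.span (Set.range MvPolynomial.X) • (⊤ : Submodule (PolyA n k) M.X) := hx
  refine span_smul_induction (P := fun x => (DirectSum.decompose M.gr x m : M.X) ∈ M.IM)
    (by simp) (fun y z hy hz => ?_) ?_ hx
  · rw [DirectSum.decompose_add, DirectSum.add_apply, Submodule.coe_add]
    exact add_mem hy hz
  · rintro _ ⟨i, rfl⟩ y -
    rw [decompose_X_smul]
    exact Submodule.smul_mem_smul (Ideal.subset_span ⟨i, rfl⟩) Submodule.mem_top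

theorem decompose_eq_zero_of_mem_pow_smul_top {n₀ : ℤ} (hbdd : ∀ m, n₀ ≤ m → M.gr m = ⊥) {j : ℕ}
    {m : ℤ} (hm : n₀ ≤ m + j) {x : M.X}
    (hx : x ∈ (MvPolynomial.idealOfVars (Fin n) k ^ j • ⊤ : Submodule (PolyA n k) M.X)) :
    (DirectSum.decompose M.gr x m : M.X) = 0 := by
  induction j generalizing m x with
  | zero =>
    rw [← Submodule.mem_bot k, ← hbdd m (by simpa using hm)]
    exact SetLike.coe_mem _
  | succ j ih =>
    rw [pow_succ', Submodule.mul_smul] at hx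
    refine span_smul_induction (P := fun x => (DirectSum.decompose M.gr x m : M.X) = 0)
      (by simp) (fun y z hy hz => by simp [hy, hz]) ?_ hx
    rintro _ ⟨i, rfl⟩ y hy
    rw [decompose_X_smul, ih (by push_cast at hm; omega) hy, smul_zero]

theorem locally_nilpotent_of_pow_mem_IM (hbdd : ∃ n₀ : ℤ, ∀ m : ℤ, n₀ ≤ m → M.gr m = ⊥)
    {f : Module.End (PolyA n k) M.X} (hf : IsHomogeneousMap M.gr 0 f) {q : ℕ}
    (hq : ∀ x, (f ^ q) x ∈ M.IM) (x : M.X) : ∃ r, (f ^ r) x = 0 := by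
  obtain ⟨n₀, hn₀⟩ := hbdd
  suffices x ∈ f.maxGenEigenspace 0 by simpa [Module.End.mem_maxGenEigenspace] using this
  induction x using DirectSum.Decomposition.inductionOn M.gr with
  | zero => exact zero_mem _
  | @homogeneous m x =>
    set j := (n₀ - m).toNat
    have hdeg : (f ^ (q * j)) x ∈ M.gr m := by
      simpa [Module.End.pow_apply] using hf.iterate (q * j) m x x.2
    have hpow : (f ^ (q * j)) x ∈
        (MvPolynomial.idealOfVars (Fin n) k ^ j • ⊤ : Submodule (PolyA n k) M.X) := by
      rw [pow_mul]
      exact pow_apply_mem_pow_smul_top hq j x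
    have hzero : (f ^ (q * j)) (x : M.X) = 0 := by
      rw [← DirectSum.decompose_of_mem_same _ hdeg]
      exact M.decompose_eq_zero_of_mem_pow_smul_top hn₀ (by omega) hpow
    simpa [Module.End.mem_maxGenEigenspace] using ⟨_, hzero⟩
  | add y z hy hz => exact add_mem hy hz

theorem exists_homogeneousPart_eq (c : ℤ) (f : Module.End (PolyA n k) M.X) :
    ∃ g : Module.End (PolyA n k) M.X,
      g.restrictScalars k = homogeneousPart M.gr c (f.restrictScalars k) :=
  ⟨{ homogeneousPart M.gr c (f.restrictScalars k) with
      map_smul' := map_mvPolynomial_smul_of_map_X_smul _ fun i =>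
        homogeneousPart_map_of_map_comm (M.isHomogeneousMap_X_smul i) fun x => map_smul f _ x },
    rfl⟩

theorem exists_homogeneous_inner_inverse_mod_IM [Module.Projective (PolyA n k) M.X] {c : ℤ}
    {f : Module.End (PolyA n k) M.X} (hf : IsHomogeneousMap M.gr (-c) f) :
    ∃ g : Module.End (PolyA n k) M.X, IsHomogeneousMap M.gr c g ∧
      M.reduceEnd (f * g * f) = M.reduceEnd f := by
  obtain ⟨g₀, hg₀⟩ :=
    exists_reduceEndModIdeal_mul_mul_eq (MvPolynomial.idealOfVars (Fin n) k) f
  obtain ⟨g, hg⟩ := M.exists_homogeneousPart_eq c g₀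
  have hg_apply : ∀ x, g x = homogeneousPart M.gr c (g₀.restrictScalars k) x :=
    LinearMap.congr_fun hg
  refine ⟨g, fun m x hx => ?_, reduceEndModIdeal_eq_iff.2 fun x => ?_⟩
  · rw [hg_apply]
    exact isHomogeneousMap_homogeneousPart _ m x hx
  · rw [Module.End.mul_apply, Module.End.mul_apply, hg_apply]
    exact map_homogeneousPart_map_sub_mem M.isHomogeneous_IMk hf
      (reduceEndModIdeal_eq_iff.1 hg₀) x

theorem dk_pow_apply (j : ℕ) (x : M.X) : (M.dk ^ j) x = (M.d ^ j) x := by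
  simp only [Module.End.pow_apply]
  rfl

theorem ker_reduce_d_pow_le_range {s : ℕ}
    (hH : ∀ x : M.X, (M.dk ^ s) x ∈ M.IMk → x ∈ LinearMap.range (M.dk ^ (p - s)) ⊔ M.IMk) :
    LinearMap.ker (M.reduceEnd M.d ^ s) ≤
      LinearMap.range (M.reduceEnd M.d ^ (p - s)) := by
  intro x hx
  obtain ⟨x, rfl⟩ := Submodule.Quotient.mk_surjective _ x
  rw [LinearMap.mem_ker, ← map_pow, reduceEndModIdeal_apply_mk, Submodule.Quotient.mk_eq_zero]
    at hx
  obtain ⟨_, ⟨u, rfl⟩, z, hz, rfl⟩ :=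
    Submodule.mem_sup.1 (hH x (by rw [dk_pow_apply]; exact hx))
  refine ⟨Submodule.Quotient.mk u, ?_⟩
  rw [← map_pow, reduceEndModIdeal_apply_mk, Submodule.Quotient.eq, dk_pow_apply,
    sub_add_cancel_left]
  exact neg_mem hz

theorem isUnit_homotopySum (hbdd : ∃ n₀ : ℤ, ∀ m : ℤ, n₀ ≤ m → M.gr m = ⊥) (hp : 0 < p)
    (hexact : LinearMap.ker (M.reduceEnd M.d) ≤ LinearMap.range (M.reduceEnd M.d ^ (p - 1)))
    {h : Module.End (PolyA n k) M.X} (hdeg : IsHomogeneousMap M.gr 0 ⇑(homotopySum p M.d h))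
    (hinner : M.reduceEnd (M.d ^ (p - 1) * h * M.d ^ (p - 1)) = M.reduceEnd (M.d ^ (p - 1))) :
    IsUnit (homotopySum p M.d h) := by
  have reduce_pow_eq_zero : M.reduceEnd ((1 - homotopySum p M.d h) ^ p) = M.reduceEnd 0 := by
    rw [map_pow, map_sub, map_one, map_homotopySum, map_zero]
    exact one_sub_homotopySum_pow_eq_zero hp (by rw [← map_pow, M.d_pow, map_zero]) hexact
      (by simpa only [map_mul, map_pow] using hinner)
  have pow_apply_mem_IM (x : M.X) : ((1 - homotopySum p M.d h) ^ p) x ∈ M.IM := by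
    have hx := reduceEndModIdeal_eq_iff.1 reduce_pow_eq_zero x
    rwa [LinearMap.zero_apply, sub_zero] at hx
  have hdeg' : IsHomogeneousMap M.gr 0 ⇑(1 - homotopySum p M.d h) :=
    fun m x hx => sub_mem (by simpa using hx) (hdeg m x hx)
  have hbij := bijective_one_sub_of_locally_nilpotent _
    (M.locally_nilpotent_of_pow_mem_IM hbdd hdeg' pow_apply_mem_IM)
  rwa [sub_sub_cancel, ← Module.End.isUnit_iff] at hbij

end PDG

theorem stmt_16_general {p n : ℕ} {k : Type} [Field k] (M : PDG p n k)
    [Module.Projective (PolyA n k) M.X]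
    (hbdd : ∃ n₀ : ℤ, ∀ m : ℤ, n₀ ≤ m → M.gr m = ⊥)
    {s : ℕ} (hs1 : 1 ≤ s) (hs2 : s ≤ p - 1)
    (hH : ∀ x : M.X, (M.dk ^ s) x ∈ M.IMk →
      x ∈ LinearMap.range (M.dk ^ (p - s)) ⊔ M.IMk) :
    ∃ h : M.X →ₗ[PolyA n k] M.X,
      (∀ m : ℤ, ∀ x ∈ M.gr m, h x ∈ M.gr (m + p - 1)) ∧
      (LinearMap.id : M.X →ₗ[PolyA n k] M.X) =
        ∑ i ∈ Finset.range p, (M.d ^ (p - 1 - i)) ∘ₗ h ∘ₗ (M.d ^ i) := by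
  have hexact : LinearMap.ker (M.reduceEnd M.d) ≤ LinearMap.range (M.reduceEnd M.d ^ (p - 1)) :=
    ker_le_range_pow_pred_of_ker_pow_le_range_pow hs1 hs2 (M.ker_reduce_d_pow_le_range hH)
  have hdpow : IsHomogeneousMap M.gr (-((p - 1) • 1)) ⇑(M.d ^ (p - 1)) := by
    rw [← smul_neg, Module.End.coe_pow]
    exact M.isHomogeneousMap_d.iterate (p - 1)
  obtain ⟨h, hdeg, hinner⟩ := M.exists_homogeneous_inner_inverse_mod_IM hdpow
  have hφdeg : IsHomogeneousMap M.gr 0 ⇑(homotopySum p M.d h) :=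
    isHomogeneousMap_homotopySum M.isHomogeneousMap_d hdeg
  obtain ⟨φ, hφ⟩ := M.isUnit_homotopySum hbdd (by omega) hexact hφdeg hinner
  have hinvdeg : IsHomogeneousMap M.gr 0 ⇑(φ⁻¹).val := by
    rw [← hφ] at hφdeg
    exact hφdeg.of_rightInverse ((Module.End.isUnit_iff _).1 φ.isUnit).1
      (LinearMap.congr_fun φ.mul_inv)
  refine ⟨(φ⁻¹).val * h, fun m x hx => ?_, (homotopySum_inv_mul_eq_one M.d_pow φ hφ).symm⟩
  have hcomp := hinvdeg.comp hdeg m x hx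
  rwa [show m + ((p - 1) • (1 : ℤ) + 0) = m + p - 1 by
    rw [add_zero, nsmul_one, Nat.cast_pred (by omega), add_sub_assoc]] at hcomp

theorem stmt_16 (p n : ℕ) (hp : p.Prime) (k : Type) [Field k] [CharP k p]
    (M : PDG p n k) (hfree : M.IsFree)
    (hbdd : ∃ n₀ : ℤ, ∀ m : ℤ, n₀ ≤ m → M.gr m = ⊥)
    (s : ℕ) (hs1 : 1 ≤ s) (hs2 : s ≤ p - 1)
    (hH : ∀ x : M.X, (M.dk ^ s) x ∈ M.IMk →
      x ∈ LinearMap.range (M.dk ^ (p - s)) ⊔ M.IMk) :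
    ∃ h : M.X →ₗ[PolyA n k] M.X,
      (∀ m : ℤ, ∀ x ∈ M.gr m, h x ∈ M.gr (m + p - 1)) ∧
      (LinearMap.id : M.X →ₗ[PolyA n k] M.X) =
        ∑ i ∈ Finset.range p, (M.d ^ (p - 1 - i)) ∘ₗ h ∘ₗ (M.d ^ i) := by
  have := hfree.projective
  exact stmt_16_general M hbdd hs1 hs2 hH
end
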